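/- arXiv:1909.09832 — 3 statements merged into one kernel-verified Lean document; each statement's English description precedes it below -/
import Mathlib

section
/- Let Λ be an abelian group containing Kˣ as a subgroup such that Λ/Kˣ is a free abelian group of finite rank, and let V be a valuative submonoid of Λ which dominates the valuative submonoid V₀ := A∖{0} of Kˣ. Let R := A ⊗_{ℤ[V₀]} ℤ[V], where ℤ[M] denotes the monoid algebra of the monoid M over ℤ, the ring homomorphism ℤ[V₀] → A is induced by the inclusion of the multiplicative monoid V₀ into A, and ℤ[V₀] → ℤ[V] is induced by the inclusion V₀ ⊆ V. Let 𝔭 be the ideal of R generated by the image of V∖Vˣ in R. Then 𝔭 is a prime ideal of R and the localization R_𝔭 is a valuation ring. -/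
set_option synthInstance.maxHeartbeats 400000
set_option linter.unusedVariables false

open scoped TensorProduct

theorem key_aux
    {A K : Type} [CommRing A] [IsDomain A] [ValuationRing A]
    [Field K] [Algebra A K] [IsFractionRing A K]
    {Λ G R : Type} [CommGroup Λ] [CommGroup G] [UniqueProds G] [CommRing R]
    (f : Kˣ →* Λ) (V : Submonoid Λ) (hVval : ∀ x : Λ, x ∈ V ∨ x⁻¹ ∈ V)
    (π : Λ →* G) (κ : Λ →* Kˣ) (hκf : ∀ u, κ (f u) = u) (hπf : ∀ u, π (f u) = 1)
    (hker : ∀ x y, π x = π y → ∃ u, x = f u * y)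
    (hVA : ∀ (u : Kˣ) (a : A), algebraMap A K a = u → f u ∈ V)
    (t : V →* R) (α : A →+* R)
    (hα : ∀ (v : V) (u : Kˣ) (a : A), f u = v → algebraMap A K a = u → α a = t v)
    (φ : R →+* MonoidAlgebra K G)
    (hφ : ∀ v : V, φ (t v) = MonoidAlgebra.single (π v) (κ v : K))
    (hgen : ∀ r, r ∈ AddSubmonoid.closure (Set.range t))
    (𝔭 : Ideal R) (h𝔭 : 𝔭 = Ideal.span {r : R | ∃ v : V, ((v : Λ)⁻¹ ∉ V) ∧ r = t v}) :
    ∃ hp : 𝔭.IsPrime,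
        ∃ hd : IsDomain (Localization (@Ideal.primeCompl _ _ 𝔭 hp)),
          @ValuationRing (Localization (@Ideal.primeCompl _ _ 𝔭 hp)) _ hd := by
  classical
  have hinj : ∀ x y, π x = π y → (κ x : K) = κ y → x = y := by
    intro x y h1 h2
    obtain ⟨u, rfl⟩ := hker x y h1
    have h3 : κ (f u * y) = κ y := Units.ext h2
    rw [map_mul, hκf] at h3
    have : u = 1 := by simpa using h3
    simp [this]
  have hvr : ∀ u : Kˣ, (∃ a, algebraMap A K a = u) ∨ (∃ a, algebraMap A K a = (u⁻¹ : Kˣ)) := by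
    intro u
    rcases ValuationRing.isInteger_or_isInteger A (u : K) with h | h
    · left; exact h
    · right; simpa [IsLocalization.IsInteger] using h
  -- addition of two terms in the same coset
  have hadd1 : ∀ (v w : V) (u : Kˣ) (a : A), (v : Λ) = f u * w → algebraMap A K a = u →
      t v + t w = 0 ∨ ∃ x : V, π x = π w ∧ t v + t w = t x := by
    intro v w u a hv ha
    have e1 : t v = α a * t w := by
      rw [hα ⟨f u, hVA u a ha⟩ u a rfl ha, ← map_mul]
      congr 1; exact Subtype.ext hv
    have e2 : t v + t w = α (a + 1) * t w := by rw [e1, map_add, map_one]; ring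
    by_cases h0 : a + 1 = 0
    · left; rw [e2, h0, map_zero, zero_mul]
    · right
      have h1 : algebraMap A K (a + 1) ≠ 0 := by
        simpa using (IsFractionRing.injective A K).ne h0
      let u' : Kˣ := Units.mk0 _ h1
      refine ⟨⟨f u', hVA u' (a + 1) rfl⟩ * w, ?_, ?_⟩
      · simp [hπf]
      · rw [e2, hα ⟨f u', hVA u' (a + 1) rfl⟩ u' (a + 1) rfl rfl, ← map_mul]
  have hadd : ∀ (v w : V), π v = π w →
      t v + t w = 0 ∨ ∃ x : V, π x = π w ∧ t v + t w = t x := by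
    intro v w h
    obtain ⟨u, hu⟩ := hker _ _ h
    rcases hvr u with ⟨a, ha⟩ | ⟨a, ha⟩
    · exact hadd1 v w u a hu ha
    · have := hadd1 w v u⁻¹ a (by rw [hu]; simp) ha
      rwa [add_comm, h] at this
  have hrep : ∀ r : R, ∃ s : Finset V, Set.InjOn (fun v : V => π v) s ∧ r = ∑ v ∈ s, t v := by
    intro r
    induction hgen r using AddSubmonoid.closure_induction_right with
    | zero => exact ⟨∅, by simp, by simp⟩
    | add_right r _ y hy ih =>
      obtain ⟨v, rfl⟩ := hy
      obtain ⟨s, hs, rfl⟩ := ih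
      by_cases hv : ∃ w ∈ s, π v = π w
      · obtain ⟨w, hw, hvw⟩ := hv
        have hs' : Set.InjOn (fun v : V => π v) (s.erase w : Finset V) :=
          hs.mono (by intro x hx; exact Finset.mem_of_mem_erase hx)
        have e : ∑ v ∈ s, t v + t v = ∑ v ∈ s.erase w, t v + (t v + t w) := by
          rw [← Finset.sum_erase_add s _ hw]; ring
        rcases hadd v w hvw with h | ⟨x, hx, h⟩
        · exact ⟨s.erase w, hs', by rw [e, h, add_zero]⟩
        · have hx' : ∀ y ∈ s.erase w, π y ≠ π x := by
            intro y hy h'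
            rw [hx] at h'
            exact (Finset.ne_of_mem_erase hy) (hs (Finset.mem_of_mem_erase hy) hw h')
          have hxs : x ∉ s.erase w := fun h => hx' x h rfl
          refine ⟨insert x (s.erase w), ?_, ?_⟩
          · rw [Finset.coe_insert, Set.injOn_insert (by exact_mod_cast hxs)]
            refine ⟨hs', ?_⟩
            rintro ⟨y, hy, h'⟩
            exact hx' y hy h'
          · rw [Finset.sum_insert hxs, e, h, add_comm]
      · push Not at hv
        have hxs : v ∉ s := fun h => hv v h rfl
        refine ⟨insert v s, ?_, ?_⟩
        · rw [Finset.coe_insert, Set.injOn_insert (by exact_mod_cast hxs)]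
          refine ⟨hs, ?_⟩
          rintro ⟨y, hy, h'⟩
          exact hv y hy h'.symm
        · rw [Finset.sum_insert hxs, add_comm]
  -- coefficients
  have hcoef : ∀ s : Finset V, Set.InjOn (fun v : V => π v) s → ∀ v ∈ s,
      (φ (∑ v ∈ s, t v)).coeff (π v) = κ v := by
    intro s hs v hv
    rw [map_sum, MonoidAlgebra.coeff_sum, Finset.sum_apply', Finset.sum_eq_single v]
    · simp [hφ]
    · intro w hw hne
      rw [hφ, MonoidAlgebra.coeff_single, Finsupp.single_apply, if_neg]
      intro h; exact hne (hs hw hv h)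
    · intro h; exact absurd hv h
  have hsupp : ∀ s : Finset V, ∀ q, (φ (∑ v ∈ s, t v)).coeff q ≠ 0 → ∃ v ∈ s, π v = q := by
    intro s q hq
    by_contra hcon
    push Not at hcon
    apply hq
    rw [map_sum, MonoidAlgebra.coeff_sum, Finset.sum_apply']
    refine Finset.sum_eq_zero fun w hw => ?_
    rw [hφ, MonoidAlgebra.coeff_single, Finsupp.single_apply, if_neg (hcon w hw)]
  have hφinj : Function.Injective φ := by
    rw [injective_iff_map_eq_zero]
    intro r hr
    obtain ⟨s, hs, rfl⟩ := hrep r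
    rcases s.eq_empty_or_nonempty with rfl | ⟨v, hv⟩
    · simp
    · have := hcoef s hs v hv
      rw [hr] at this
      exact absurd this.symm (by simp)
  have hR : IsDomain R := hφinj.isDomain φ
  -- the predicate
  let P : MonoidAlgebra K G → Prop := fun l => ∀ x : Λ, l.coeff (π x) = (κ x : K) →
    x ∈ V ∧ x⁻¹ ∉ V
  have hP0 : P 0 := by
    intro x hx
    exact absurd hx.symm (by simp)
  have hPadd1 : ∀ (x y : Λ) (u : Kˣ) (a : A), x = f u * y → algebraMap A K a = u →
      (y ∈ V ∧ y⁻¹ ∉ V) → (x ∈ V ∧ x⁻¹ ∉ V) := by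
    intro x y u a hx ha ⟨h1, h2⟩
    refine ⟨hx ▸ V.mul_mem (hVA u a ha) h1, fun h => h2 ?_⟩
    have := V.mul_mem (hVA u a ha) h
    rwa [hx, mul_inv, mul_inv_cancel_left] at this
  have hPadd : ∀ l₁ l₂, P l₁ → P l₂ → P (l₁ + l₂) := by
    have main : ∀ l₁ l₂ : MonoidAlgebra K G, P l₁ → ∀ x : Λ, (l₁ + l₂).coeff (π x) = (κ x : K) →
        ∀ a : A, l₁.coeff (π x) ≠ 0 →
        algebraMap A K a = l₂.coeff (π x) / l₁.coeff (π x) → (x ∈ V ∧ x⁻¹ ∉ V) := by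
      intro l₁ l₂ h1 x hx a h0 ha
      rw [MonoidAlgebra.coeff_add, Finsupp.add_apply] at hx
      have e : algebraMap A K (a + 1) = (κ x : K) / l₁.coeff (π x) := by
        rw [map_add, ha, ← hx, map_one]; field_simp; ring
      let b : Kˣ := Units.mk0 _ h0
      refine hPadd1 x (f (κ x / b)⁻¹ * x) (κ x / b) (a + 1) (by rw [← mul_assoc, ← map_mul]; simp)
        (by rw [e]; simp [b]) (h1 _ ?_)
      simp [hπf, hκf, b]
    intro l₁ l₂ h1 h2 x hx
    have hx' := hx
    rw [MonoidAlgebra.coeff_add, Finsupp.add_apply] at hx'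
    by_cases h10 : l₁.coeff (π x) = 0
    · exact h2 x (by rwa [h10, zero_add] at hx')
    by_cases h20 : l₂.coeff (π x) = 0
    · exact h1 x (by rwa [h20, add_zero] at hx')
    rcases hvr (Units.mk0 _ h20 / Units.mk0 _ h10) with ⟨a, ha⟩ | ⟨a, ha⟩
    · exact main l₁ l₂ h1 x hx a h10 (by rw [ha]; simp)
    · exact main l₂ l₁ h2 x (by rwa [add_comm] at hx) a h20 (by rw [ha]; simp)
  have hPmul : ∀ (v : V) l, P l → P (φ (t v) * l) := by
    intro v l hl x hx
    rw [hφ, MonoidAlgebra.coeff_single_mul_apply, ← map_inv, ← map_mul] at hx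
    have := hl ((v : Λ)⁻¹ * x) (by
      rw [map_mul κ, map_inv κ, Units.val_mul, ← hx]; simp)
    refine ⟨by simpa using V.mul_mem v.2 this.1, fun h => this.2 ?_⟩
    simpa using V.mul_mem h v.2
  have hPp : ∀ r ∈ 𝔭, P (φ r) := by
    intro r hr
    rw [h𝔭] at hr
    induction hr using Submodule.span_induction with
    | mem r hr =>
      obtain ⟨v, hv, rfl⟩ := hr
      intro x hx
      rw [hφ, MonoidAlgebra.coeff_single, Finsupp.single_apply] at hx
      split_ifs at hx with h
      · have := hinj _ _ h hx
        rw [← this]; exact ⟨v.2, hv⟩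
      · exact absurd hx.symm (by simp)
    | zero => rw [map_zero]; exact hP0
    | add x y _ _ hx hy => rw [map_add]; exact hPadd _ _ hx hy
    | smul a x _ hx =>
      rw [smul_eq_mul]
      induction hgen a using AddSubmonoid.closure_induction with
      | mem y hy => obtain ⟨v, rfl⟩ := hy; rw [map_mul]; exact hPmul v _ hx
      | zero => simpa using hP0
      | add y z _ _ hy hz => rw [add_mul, map_add]; exact hPadd _ _ hy hz
  have hone : ∀ s : Finset V, Set.InjOn (fun v : V => π v) s → ∀ v ∈ s, (v : Λ)⁻¹ ∈ V →
      (∑ v ∈ s, t v) ∉ 𝔭 := by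
    intro s hs v hv hv' hmem
    exact (hPp _ hmem v (hcoef s hs v hv)).2 hv'
  -- decomposition of elements outside of the ideal
  have hdec : ∀ r, r ∉ 𝔭 → ∃ s : Finset V, Set.InjOn (fun v : V => π v) s ∧ s.Nonempty ∧
      (∀ v ∈ s, (v : Λ)⁻¹ ∈ V) ∧ r - ∑ v ∈ s, t v ∈ 𝔭 := by
    intro r hr
    obtain ⟨s, hs, rfl⟩ := hrep r
    have e := Finset.sum_filter_add_sum_filter_not s (fun v : V => (v : Λ)⁻¹ ∈ V) t
    have hm : (∑ v ∈ s.filter (fun v : V => ¬ ((v : Λ)⁻¹ ∈ V)), t v) ∈ 𝔭 := by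
      refine Ideal.sum_mem _ fun v hv => ?_
      rw [h𝔭]
      exact Ideal.subset_span ⟨v, (Finset.mem_filter.1 hv).2, rfl⟩
    refine ⟨s.filter (fun v : V => (v : Λ)⁻¹ ∈ V), hs.mono (by intro x hx; exact (Finset.mem_filter.1 hx).1), ?_,
      fun v hv => (Finset.mem_filter.1 hv).2, ?_⟩
    · rw [Finset.nonempty_iff_ne_empty]
      intro h
      rw [h, Finset.sum_empty, zero_add] at e
      exact hr (e ▸ hm)
    · rw [← e, add_sub_cancel_left]; exact hm
  have hp : 𝔭.IsPrime := by
    refine ⟨?_, ?_⟩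
    · rw [Ideal.ne_top_iff_one]
      have := hone {1} (by simp) 1 (by simp) (by simp)
      simpa using this
    · intro r r' hrr
      by_contra hcon
      push Not at hcon
      obtain ⟨s, hs, ⟨v, hv⟩, hsu, hsp⟩ := hdec r hcon.1
      obtain ⟨s', hs', ⟨v', hv'⟩, hsu', hsp'⟩ := hdec r' hcon.2
      have hmem : (∑ v ∈ s, t v) * (∑ v ∈ s', t v) ∈ 𝔭 := by
        have e : (∑ v ∈ s, t v) * (∑ v ∈ s', t v) = r * r' - (r - ∑ v ∈ s, t v) * r'
          - (∑ v ∈ s, t v) * (r' - ∑ v ∈ s', t v) := by ring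
        rw [e]
        exact Ideal.sub_mem _ (Ideal.sub_mem _ hrr (Ideal.mul_mem_right _ _ hsp))
          (Ideal.mul_mem_left _ _ hsp')
      have n1 : (φ (∑ v ∈ s, t v)).coeff.support.Nonempty :=
        ⟨π v, by rw [Finsupp.mem_support_iff, hcoef s hs v hv]; simp⟩
      have n2 : (φ (∑ v ∈ s', t v)).coeff.support.Nonempty :=
        ⟨π v', by rw [Finsupp.mem_support_iff, hcoef s' hs' v' hv']; simp⟩
      obtain ⟨a, ha, b, hb, hu⟩ := UniqueProds.uniqueMul_of_nonempty n1 n2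
      obtain ⟨w, hw, rfl⟩ := hsupp _ _ (Finsupp.mem_support_iff.1 ha)
      obtain ⟨w', hw', rfl⟩ := hsupp _ _ (Finsupp.mem_support_iff.1 hb)
      have e := MonoidAlgebra.coeff_mul_mul_of_uniqueMul hu
      rw [hcoef s hs w hw, hcoef s' hs' w' hw', ← map_mul, ← map_mul, ← Units.val_mul,
        ← map_mul] at e
      refine (hPp _ hmem _ e).2 ?_
      rw [mul_inv]
      exact V.mul_mem (hsu w hw) (hsu' w' hw')
  refine ⟨hp, IsLocalization.isDomain_localization 𝔭.primeCompl_le_nonZeroDivisors, ?_⟩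
  -- factorization
  have hmin : ∀ s : Finset V, s.Nonempty → ∃ v ∈ s, ∀ w ∈ s, ∃ x : V, w = v * x := by
    intro s hs
    induction hs using Finset.Nonempty.cons_induction with
    | singleton a => exact ⟨a, by simp, fun w hw => ⟨1, by simpa using hw⟩⟩
    | cons a s ha hs ih =>
      obtain ⟨v, hv, h⟩ := ih
      rcases hVval ((a : Λ)⁻¹ * v) with h1 | h1
      · refine ⟨a, by simp, fun w hw => ?_⟩
        rcases Finset.mem_cons.1 hw with rfl | hw
        · exact ⟨1, by simp⟩
        · obtain ⟨x, rfl⟩ := h w hw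
          exact ⟨⟨_, h1⟩ * x, Subtype.ext (by simp [mul_assoc])⟩
      · refine ⟨v, by simp [hv], fun w hw => ?_⟩
        rcases Finset.mem_cons.1 hw with rfl | hw
        · exact ⟨⟨_, h1⟩, Subtype.ext (by simp)⟩
        · exact h w hw
  have hfac : ∀ r : R, r ≠ 0 → ∃ v : V, ∃ e, e ∉ 𝔭 ∧ r = t v * e := by
    intro r hr
    obtain ⟨s, hs, rfl⟩ := hrep r
    have hne : s.Nonempty := by
      rw [Finset.nonempty_iff_ne_empty]; rintro rfl; simp at hr
    obtain ⟨v, hv, h⟩ := hmin s hne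
    have e : ∃ e, ∑ v ∈ s, t v = t v * e := by
      have : t v ∣ ∑ v ∈ s, t v := Finset.dvd_sum fun w hw => by
        obtain ⟨x, rfl⟩ := h w hw
        exact ⟨t x, map_mul _ _ _⟩
      exact this
    obtain ⟨e, he⟩ := e
    refine ⟨v, e, fun hmem => ?_, he⟩
    have h1 := hcoef s hs v hv
    rw [he, map_mul, hφ, MonoidAlgebra.coeff_single_mul_apply, inv_mul_cancel] at h1
    have h2 : (φ e).coeff (π 1) = (κ 1 : K) := by
      simpa using h1
    exact (hPp e hmem 1 h2).2 (by simp)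
  have hu : ∀ e, e ∉ 𝔭 → IsUnit (algebraMap R (Localization.AtPrime 𝔭) e) := fun e he =>
    IsLocalization.map_units _ (⟨e, he⟩ : 𝔭.primeCompl)
  have hloc : ∀ z : Localization.AtPrime 𝔭, z = 0 ∨
      ∃ v : V, Associated (algebraMap R (Localization.AtPrime 𝔭) (t v)) z := by
    intro z
    obtain ⟨⟨r, d⟩, hz⟩ := IsLocalization.surj 𝔭.primeCompl z
    have hd := hu d d.2
    by_cases hr : r = 0
    · left
      subst hr
      simpa [hd.ne_zero] using hz
    · right
      obtain ⟨v, e, he, rfl⟩ := hfac r hr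
      refine ⟨v, ?_⟩
      rw [map_mul] at hz
      have a1 : Associated (z * algebraMap R (Localization.AtPrime 𝔭) d) z :=
        associated_mul_unit_left _ _ hd
      rw [hz] at a1
      exact (associated_mul_unit_left _ _ (hu e he)).symm.trans a1
  haveI : IsDomain (Localization 𝔭.primeCompl) :=
    IsLocalization.isDomain_localization 𝔭.primeCompl_le_nonZeroDivisors
  refine ValuationRing.iff_dvd_total.2 ⟨fun x y => ?_⟩
  rcases hloc x with rfl | ⟨v, hv⟩
  · right; exact dvd_zero _
  rcases hloc y with rfl | ⟨w, hw⟩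
  · left; exact dvd_zero _
  have hd : ∀ v w : V, (v : Λ)⁻¹ * w ∈ V → t v ∣ t w := fun v w h =>
    ⟨t ⟨_, h⟩, by rw [← map_mul]; congr 1; exact Subtype.ext (by simp)⟩
  rcases hVval ((v : Λ)⁻¹ * w) with h | h
  · left
    exact hv.symm.dvd.trans ((map_dvd _ (hd v w h)).trans hw.dvd)
  · right
    exact hw.symm.dvd.trans ((map_dvd _ (hd w v (by simpa [mul_comm] using h))).trans hv.dvd)

theorem split_aux {K Λ : Type} [Field K] [CommGroup Λ] (f : Kˣ →* Λ) (hf : Function.Injective f)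
    (n : ℕ) (e : (Λ ⧸ f.range) ≃* Multiplicative (Fin n → ℤ)) :
    ∃ (π : Λ →* Multiplicative (Fin n → ℤ)) (κ : Λ →* Kˣ), (∀ u, κ (f u) = u) ∧
      (∀ u, π (f u) = 1) ∧ (∀ x y, π x = π y → ∃ u, x = f u * y) := by
  let π : Λ →* Multiplicative (Fin n → ℤ) := e.toMonoidHom.comp (QuotientGroup.mk' f.range)
  have hπf : ∀ u, π (f u) = 1 := by
    intro u
    have : (QuotientGroup.mk' f.range) (f u) = 1 := (QuotientGroup.eq_one_iff _).2 ⟨u, rfl⟩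
    simp only [π, MonoidHom.comp_apply, this, map_one]
  have hker : ∀ x y, π x = π y → ∃ u, x = f u * y := by
    intro x y h
    have h1 : (QuotientGroup.mk' f.range) y = (QuotientGroup.mk' f.range) x :=
      (e.injective h).symm
    obtain ⟨u, hu⟩ := QuotientGroup.eq.1 h1
    exact ⟨u, by rw [hu, mul_comm, mul_inv_cancel_left]⟩
  have hsurj : Function.Surjective π := e.surjective.comp (QuotientGroup.mk'_surjective _)
  let π' : Additive Λ →ₗ[ℤ] (Fin n → ℤ) := (MonoidHom.toAdditiveLeft π).toIntLinearMap
  have hs' : Function.Surjective π' := hsurj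
  obtain ⟨g, hg⟩ := π'.exists_rightInverse_of_surjective (LinearMap.range_eq_top.2 hs')
  let σ : Multiplicative (Fin n → ℤ) →* Λ := AddMonoidHom.toMultiplicativeLeft g.toAddMonoidHom
  have hσ : ∀ q, π (σ q) = q := fun q => LinearMap.congr_fun hg q
  have hex : ∀ x, ∃ u, x = f u * σ (π x) := fun x => hker _ _ (hσ _).symm
  choose κ hκ using hex
  refine ⟨π, MonoidHom.mk' κ ?_, ?_, hπf, hker⟩
  · intro a b
    apply hf
    have h1 := hκ (a * b)
    have h2 : a * b = f (κ a * κ b) * σ (π (a * b)) := by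
      conv_lhs => rw [hκ a, hκ b]
      simp only [map_mul]
      exact mul_mul_mul_comm _ _ _ _
    exact mul_right_cancel (h1.symm.trans h2)
  · intro u
    apply hf
    have h1 := hκ (f u)
    rw [hπf, map_one, mul_one] at h1
    exact h1.symm

/-- Let `A` be a Henselian valuation ring which is not a field, with fraction field `K`.
Let `Λ` be an abelian group containing `Kˣ` (via an injective homomorphism `f`) with
`Λ/Kˣ` free of finite rank, and let `V` be a valuative submonoid of `Λ` dominating the
valuative submonoid `V₀ := A∖{0}` of `Kˣ`.  Let `R := A ⊗_{ℤ[V₀]} ℤ[V]` (the algebra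
structures being induced by `V₀ → A` and by the inclusion `V₀ ⊆ V`) and let `𝔭` be the
ideal of `R` generated by the image of `V∖Vˣ`.  Then `𝔭` is a prime ideal of `R` and the
localization `R_𝔭` is a valuation ring. -/
theorem tensor_monoidAlgebra_localization_valuationRing
    {A K : Type} [CommRing A] [IsDomain A] [ValuationRing A] [HenselianLocalRing A]
    (hA : ¬IsField A)
    [Field K] [Algebra A K] [IsFractionRing A K]
    {Λ : Type} [CommGroup Λ] (f : Kˣ →* Λ) (hf : Function.Injective f)
    (n : ℕ) (hfree : Nonempty ((Λ ⧸ f.range) ≃* Multiplicative (Fin n → ℤ)))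
    (V₀ : Submonoid Λ)
    (hV₀ : V₀ = Submonoid.map f
      (Submonoid.comap (Units.coeHom K) (algebraMap A K).range.toSubmonoid))
    (V : Submonoid Λ) (hVval : ∀ x : Λ, x ∈ V ∨ x⁻¹ ∈ V)
    (hle : V₀ ≤ V)
    (hdom : {x : Λ | x ∈ V ∧ x⁻¹ ∈ V} ∩ (V₀ : Set Λ) = {x : Λ | x ∈ V₀ ∧ x⁻¹ ∈ V₀}) :
    ∀ [instA : Algebra (MonoidAlgebra ℤ ↥V₀) A],
      (∀ (x : ↥V₀) (u : Kˣ) (a : A), f u = (x : Λ) → algebraMap A K a = (u : K) →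
        algebraMap (MonoidAlgebra ℤ ↥V₀) A (MonoidAlgebra.of ℤ ↥V₀ x) = a) →
    ∀ [instM : Algebra (MonoidAlgebra ℤ ↥V₀) (MonoidAlgebra ℤ ↥V)],
      (∀ x : ↥V₀, algebraMap (MonoidAlgebra ℤ ↥V₀) (MonoidAlgebra ℤ ↥V)
          (MonoidAlgebra.of ℤ ↥V₀ x) = MonoidAlgebra.of ℤ ↥V (Submonoid.inclusion hle x)) →
    ∀ 𝔭 : Ideal (A ⊗[MonoidAlgebra ℤ ↥V₀] MonoidAlgebra ℤ ↥V),
      𝔭 = Ideal.span {r : A ⊗[MonoidAlgebra ℤ ↥V₀] MonoidAlgebra ℤ ↥V | ∃ v : ↥V,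
          ((v : Λ)⁻¹ ∉ V) ∧
          r = (1 : A) ⊗ₜ[MonoidAlgebra ℤ ↥V₀] MonoidAlgebra.of ℤ ↥V v} →
      ∃ hp : 𝔭.IsPrime,
        ∃ hd : IsDomain (Localization (@Ideal.primeCompl _ _ 𝔭 hp)),
          @ValuationRing (Localization (@Ideal.primeCompl _ _ 𝔭 hp)) _ hd := by
  intro instA hA' instM hM 𝔭 h𝔭
  obtain ⟨e⟩ := hfree
  obtain ⟨π, κ, hκf, hπf, hker⟩ := split_aux f hf n e
  have hV₀mem : ∀ (u : Kˣ) (a : A), algebraMap A K a = u → f u ∈ V₀ := by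
    intro u a h
    rw [hV₀]
    exact ⟨u, ⟨a, h⟩, rfl⟩
  have hVA : ∀ (u : Kˣ) (a : A), algebraMap A K a = u → f u ∈ V := fun u a h =>
    hle (hV₀mem u a h)
  let t : V →* A ⊗[MonoidAlgebra ℤ ↥V₀] MonoidAlgebra ℤ ↥V :=
    (Algebra.TensorProduct.includeRight :
      MonoidAlgebra ℤ ↥V →ₐ[MonoidAlgebra ℤ ↥V₀] A ⊗[MonoidAlgebra ℤ ↥V₀] MonoidAlgebra ℤ ↥V).toRingHom.toMonoidHom.comp
      (MonoidAlgebra.of ℤ ↥V)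
  let α : A →+* A ⊗[MonoidAlgebra ℤ ↥V₀] MonoidAlgebra ℤ ↥V :=
    Algebra.TensorProduct.includeLeftRingHom
  have ht : ∀ v : V, t v = (1 : A) ⊗ₜ[MonoidAlgebra ℤ ↥V₀] MonoidAlgebra.of ℤ ↥V v := fun _ => rfl
  have hα0 : ∀ a, α a = a ⊗ₜ[MonoidAlgebra ℤ ↥V₀] (1 : MonoidAlgebra ℤ ↥V) := fun _ => rfl
  have hα : ∀ (v : V) (u : Kˣ) (a : A), f u = v → algebraMap A K a = u → α a = t v := by
    intro v u a hu ha
    have h1 := hA' ⟨f u, hV₀mem u a ha⟩ u a rfl ha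
    have h2 := hM ⟨f u, hV₀mem u a ha⟩
    have h3 : Submonoid.inclusion hle ⟨f u, hV₀mem u a ha⟩ = v := Subtype.ext hu
    rw [h3] at h2
    rw [ht, hα0, ← h1, ← h2, Algebra.algebraMap_eq_smul_one, Algebra.algebraMap_eq_smul_one,
      TensorProduct.smul_tmul]
  -- the map to the Laurent polynomial ring
  let c : A →+* MonoidAlgebra K (Multiplicative (Fin n → ℤ)) :=
    (MonoidAlgebra.singleOneRingHom).comp (algebraMap A K)
  let ι : Λ →* MonoidAlgebra K (Multiplicative (Fin n → ℤ)) :=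
    { toFun := fun x => MonoidAlgebra.single (π x) (κ x : K)
      map_one' := by simp [MonoidAlgebra.one_def]
      map_mul' := by intro x y; simp [MonoidAlgebra.single_mul_single] }
  let d : MonoidAlgebra ℤ ↥V →+* MonoidAlgebra K (Multiplicative (Fin n → ℤ)) :=
    (MonoidAlgebra.lift ℤ (MonoidAlgebra K (Multiplicative (Fin n → ℤ))) V (ι.comp V.subtype)).toRingHom
  have hd : ∀ v : V, d (MonoidAlgebra.of ℤ V v) = ι v := fun v => MonoidAlgebra.lift_of _ _
  have hcomm : d.comp (algebraMap (MonoidAlgebra ℤ ↥V₀) (MonoidAlgebra ℤ ↥V)) =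
      c.comp (algebraMap (MonoidAlgebra ℤ ↥V₀) A) := by
    refine MonoidAlgebra.ringHom_ext' (RingHom.ext_int _ _) (MonoidHom.ext fun x => ?_)
    obtain ⟨x, hx⟩ := x
    have hx' := hx
    rw [hV₀] at hx'
    obtain ⟨u, ⟨a, ha⟩, rfl⟩ := hx'
    have ha' : algebraMap A K a = u := ha
    change d (algebraMap _ _ (MonoidAlgebra.of ℤ V₀ ⟨f u, hx⟩)) =
      c (algebraMap _ _ (MonoidAlgebra.of ℤ V₀ ⟨f u, hx⟩))
    rw [hM, hA' _ u a rfl ha', hd]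
    change MonoidAlgebra.single (π (f u)) (κ (f u) : K) = MonoidAlgebra.single 1 (algebraMap A K a)
    rw [hπf, hκf, ha']
  letI algL : Algebra (MonoidAlgebra ℤ ↥V₀) (MonoidAlgebra K (Multiplicative (Fin n → ℤ))) :=
    (c.comp (algebraMap (MonoidAlgebra ℤ ↥V₀) A)).toAlgebra
  let c' : A →ₐ[MonoidAlgebra ℤ ↥V₀] MonoidAlgebra K (Multiplicative (Fin n → ℤ)) :=
    { c with commutes' := fun _ => rfl }
  let d' : MonoidAlgebra ℤ ↥V →ₐ[MonoidAlgebra ℤ ↥V₀] MonoidAlgebra K (Multiplicative (Fin n → ℤ)) :=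
    { d with commutes' := fun x => RingHom.congr_fun hcomm x }
  let φ := (Algebra.TensorProduct.productMap c' d').toRingHom
  have hφ : ∀ v : V, φ (t v) = MonoidAlgebra.single (π v) (κ v : K) := by
    intro v
    have : φ (t v) = c' 1 * d' (MonoidAlgebra.of ℤ V v) := rfl
    rw [this, map_one, one_mul]
    exact hd v
  have hgα : ∀ (a : A) r, r ∈ AddSubmonoid.closure (Set.range t) →
      α a * r ∈ AddSubmonoid.closure (Set.range t) := by
    intro a r hr
    by_cases ha : a = 0
    · rw [ha, map_zero, zero_mul]; exact zero_mem _
    have h1 : algebraMap A K a ≠ 0 := by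
      simpa using (IsFractionRing.injective A K).ne ha
    rw [hα ⟨f (Units.mk0 _ h1), hVA _ a rfl⟩ _ a rfl rfl]
    induction hr using AddSubmonoid.closure_induction with
    | mem y hy =>
      obtain ⟨v, rfl⟩ := hy
      rw [← map_mul]; exact AddSubmonoid.subset_closure ⟨_, rfl⟩
    | zero => rw [mul_zero]; exact zero_mem _
    | add y z _ _ hy hz => rw [mul_add]; exact add_mem hy hz
  have hgen : ∀ r, r ∈ AddSubmonoid.closure (Set.range t) := by
    intro r
    induction r using TensorProduct.induction_on with
    | zero => exact zero_mem _
    | add x y hx hy => exact add_mem hx hy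
    | tmul a x =>
      have h1 : a ⊗ₜ[MonoidAlgebra ℤ ↥V₀] x = α a * ((1 : A) ⊗ₜ[MonoidAlgebra ℤ ↥V₀] x) := by
        rw [hα0, Algebra.TensorProduct.tmul_mul_tmul, mul_one, one_mul]
      rw [h1]
      apply hgα
      induction x using MonoidAlgebra.induction_on with
      | of v => exact AddSubmonoid.subset_closure ⟨v, rfl⟩
      | add x y hx hy => rw [TensorProduct.tmul_add]; exact add_mem (hx (by
            rw [hα0, Algebra.TensorProduct.tmul_mul_tmul, mul_one, one_mul])) (hy (by
            rw [hα0, Algebra.TensorProduct.tmul_mul_tmul, mul_one, one_mul]))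
      | smul m x hx =>
        have h2 : (1 : A) ⊗ₜ[MonoidAlgebra ℤ ↥V₀] (m • x) =
            α (m : A) * ((1 : A) ⊗ₜ[MonoidAlgebra ℤ ↥V₀] x) := by
          rw [map_intCast, ← zsmul_eq_mul]
          exact map_zsmul (TensorProduct.mk (MonoidAlgebra ℤ ↥V₀) A (MonoidAlgebra ℤ ↥V) 1) m x
        rw [h2]
        exact hgα _ _ (hx (by
            rw [hα0, Algebra.TensorProduct.tmul_mul_tmul, mul_one, one_mul]))
  exact key_aux f V hVval π κ hκf hπf hker hVA t α hα φ hφ hgen 𝔭 h𝔭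
end

section
/- Let Λ be an abelian group containing Kˣ as a subgroup such that Λ/Kˣ is a free abelian group of finite rank, and let V be a valuative submonoid of Λ which dominates the valuative submonoid V₀ := A∖{0} of Kˣ. Let R := A ⊗_{ℤ[V₀]} ℤ[V] and let 𝔭 be the ideal of R generated by the image of V∖Vˣ in R. Then the local ring R_𝔭 is a valuation ring whose value group is isomorphic, as an ordered abelian group, to Λ/Vˣ (totally ordered with nonnegative cone the image of V), and whose residue field is isomorphic as a k-algebra to the rational function field k(U₁, …, Uₙ) in n variables over k, where n is the rank of the free abelian group Vˣ/Aˣ (note Vˣ ∩ Kˣ = Aˣ, so Vˣ/Aˣ embeds into Λ/Kˣ and is free of finite rank). -/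
set_option synthInstance.maxHeartbeats 400000
set_option linter.unusedVariables false

open scoped TensorProduct

/-- products of integer powers -/
def zhomAux {G : Type*} [CommGroup G] {n : ℕ} (g : Fin n → G) :
    Multiplicative (Fin n → ℤ) →* G where
  toFun x := ∏ i, g i ^ (Multiplicative.toAdd x i)
  map_one' := by simp
  map_mul' x y := by simp [zpow_add, Finset.prod_mul_distrib]

lemma zhomAux_single {G : Type*} [CommGroup G] {n : ℕ} (g : Fin n → G) (i : Fin n) :
    zhomAux g (Multiplicative.ofAdd (Pi.single i 1)) = g i := by
  simp only [zhomAux, MonoidHom.coe_mk, OneHom.coe_mk, toAdd_ofAdd]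
  rw [Finset.prod_eq_single i]
  · simp
  · intro j _ hj; simp [Pi.single_eq_of_ne hj]
  · simp

lemma zhomAux_comp {G H : Type*} [CommGroup G] [CommGroup H] {n : ℕ} (g : Fin n → G)
    (p : G →* H) (x) : p (zhomAux g x) = zhomAux (fun i => p (g i)) x := by
  simp [zhomAux]

lemma zhomAux_id {n : ℕ} (x : Multiplicative (Fin n → ℤ)) :
    zhomAux (fun i => Multiplicative.ofAdd (Pi.single i (1:ℤ))) x = x := by
  apply Multiplicative.toAdd.injective
  funext j
  simp only [zhomAux, MonoidHom.coe_mk, OneHom.coe_mk, toAdd_prod, toAdd_zpow, toAdd_ofAdd,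
    Finset.sum_apply, Pi.smul_apply]
  rw [Finset.sum_eq_single j]
  · simp
  · intro i _ hi; simp [Pi.single_eq_of_ne hi.symm]
  · simp

/-- fraction field of polynomial ring -/
abbrev LFld (n : ℕ) (k : Type) [Field k] := FractionRing (MvPolynomial (Fin n) k)

/-- constants -/
noncomputable def Cc (n : ℕ) (k : Type) [Field k] : k →+* LFld n k :=
  (algebraMap (MvPolynomial (Fin n) k) (LFld n k)).comp MvPolynomial.C

/-- variables as units -/
noncomputable def Xu (n : ℕ) (k : Type) [Field k] (i : Fin n) : (LFld n k)ˣ :=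
  Units.mk0 (algebraMap (MvPolynomial (Fin n) k) (LFld n k) (MvPolynomial.X i))
    (by
      rw [Ne, FaithfulSMul.algebraMap_eq_zero_iff]
      exact MvPolynomial.X_ne_zero i)

lemma laurent_indep (n : ℕ) (k : Type) [Field k] {ι : Type*} (s : Finset ι)
    (c : ι → k) (hc : ∀ i ∈ s, c i ≠ 0) (e : ι → Multiplicative (Fin n → ℤ))
    (he : Set.InjOn e s) (hs : s.Nonempty) :
    ∑ i ∈ s, Cc n k (c i) * (zhomAux (Xu n k) (e i) : (LFld n k)ˣ) ≠ 0 := by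
  classical
  intro h0
  obtain ⟨N, hN⟩ : ∃ N : ℕ, ∀ i ∈ s, ∀ j, 0 ≤ Multiplicative.toAdd (e i) j + N := by
    refine ⟨∑ i ∈ s, ∑ j, (Multiplicative.toAdd (e i) j).natAbs, fun i hi j => ?_⟩
    have h1 : (Multiplicative.toAdd (e i) j).natAbs ≤
        ∑ j, (Multiplicative.toAdd (e i) j).natAbs :=
      Finset.single_le_sum (f := fun j => (Multiplicative.toAdd (e i) j).natAbs)
        (fun _ _ => Nat.zero_le _) (Finset.mem_univ j)
    have h2 := Finset.single_le_sum
        (f := fun i => ∑ j, (Multiplicative.toAdd (e i) j).natAbs)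
        (fun _ _ => Nat.zero_le _) hi
    omega
  let d : ι → (Fin n →₀ ℕ) := fun i =>
    Finsupp.equivFunOnFinite.symm (fun j => (Multiplicative.toAdd (e i) j + N).toNat)
  have key : ∀ i ∈ s, algebraMap (MvPolynomial (Fin n) k) (LFld n k)
      (MvPolynomial.monomial (d i) (c i)) =
      (Cc n k (c i) * (zhomAux (Xu n k) (e i) : (LFld n k)ˣ)) *
        ((zhomAux (Xu n k) (Multiplicative.ofAdd (fun _ => (N:ℤ))) : (LFld n k)ˣ) : LFld n k) := by
    intro i hi
    rw [mul_assoc, ← Units.val_mul, ← map_mul, MvPolynomial.monomial_eq, map_mul]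
    congr 1
    rw [Finsupp.prod_fintype _ _ (by simp), map_prod]
    simp only [zhomAux, MonoidHom.coe_mk, OneHom.coe_mk, Units.coe_prod, Units.val_zpow_eq_zpow_val]
    refine Finset.prod_congr rfl fun j _ => ?_
    have : ((d i j : ℕ) : ℤ) = Multiplicative.toAdd (e i) j + N := by
      simp only [d, Finsupp.equivFunOnFinite_symm_apply_apply]
      exact Int.toNat_of_nonneg (hN i hi j)
    simp only [toAdd_mul, toAdd_ofAdd, Pi.add_apply]
    rw [← this, zpow_natCast, map_pow]
    rfl
  have h1 : algebraMap (MvPolynomial (Fin n) k) (LFld n k)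
      (∑ i ∈ s, MvPolynomial.monomial (d i) (c i)) = 0 := by
    rw [map_sum, Finset.sum_congr rfl key, ← Finset.sum_mul, h0, zero_mul]
  rw [FaithfulSMul.algebraMap_eq_zero_iff] at h1
  obtain ⟨i, hi⟩ := hs
  apply hc i hi
  have h2 := congrArg (MvPolynomial.coeff (d i)) h1
  rw [MvPolynomial.coeff_sum, Finset.sum_eq_single i] at h2
  · simpa using h2
  · intro j hj hji
    rw [MvPolynomial.coeff_monomial, if_neg]
    intro hd
    apply hji
    apply he hj hi
    apply Multiplicative.toAdd.injective
    funext t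
    have := DFunLike.congr_fun hd t
    simp only [d, Finsupp.equivFunOnFinite_symm_apply_apply] at this
    have a1 := hN i hi t
    have a2 := hN j hj t
    omega
  · intro h; exact absurd hi h

lemma exists_char {G H k : Type} [CommGroup G] [CommGroup H] [Field k] {n : ℕ}
    (p : G →* Multiplicative (Fin n → ℤ)) (hp : Function.Surjective p)
    (j : H →* G) (hj : Function.Injective j) (hr : p.ker = j.range) (χ : H →* kˣ) :
    ∃ Φ : G →* (LFld n k)ˣ,
      (∀ h, (Φ (j h) : LFld n k) = Cc n k (χ h)) ∧
      (∀ i, ∃ g, Φ g = Xu n k i) ∧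
      (∀ {ι : Type} (s : Finset ι) (g : ι → G), Set.InjOn (fun i => p (g i)) s → s.Nonempty →
        ∑ i ∈ s, (Φ (g i) : LFld n k) ≠ 0) := by
  choose g₀ hg₀ using fun i : Fin n => hp (Multiplicative.ofAdd (Pi.single i (1:ℤ)))
  let σ := zhomAux g₀
  have hσ : ∀ x, p (σ x) = x := fun x => by
    simp only [σ, zhomAux_comp, hg₀, zhomAux_id]
  have hq : ∀ x : G, x / σ (p x) ∈ j.range := fun x => by
    rw [← hr, MonoidHom.mem_ker, map_div, hσ, div_self']
  let q : G →* H := (MonoidHom.ofInjective hj).symm.toMonoidHom.comp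
    (MonoidHom.codRestrict ((MonoidHom.id G) / (σ.comp p)) j.range hq)
  have hqj : ∀ x, j (q x) = x / σ (p x) := fun x => by
    have := (MonoidHom.ofInjective hj).apply_symm_apply ⟨x / σ (p x), hq x⟩
    exact congrArg Subtype.val this
  have hpj : ∀ h, p (j h) = 1 := fun h => by
    rw [← MonoidHom.mem_ker, hr]; exact ⟨h, rfl⟩
  let Φ : G →* (LFld n k)ˣ :=
    ((Units.map (Cc n k).toMonoidHom).comp (χ.comp q)) * ((zhomAux (Xu n k)).comp p)
  have hΦ : ∀ x, (Φ x : LFld n k) = Cc n k (χ (q x)) * (zhomAux (Xu n k) (p x) : (LFld n k)ˣ) :=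
    fun x => rfl
  refine ⟨Φ, fun h => ?_, fun i => ⟨σ (Multiplicative.ofAdd (Pi.single i 1)), ?_⟩,
    fun s g hs hne => ?_⟩
  · have : q (j h) = h := hj (by rw [hqj, hpj, map_one, div_one])
    rw [hΦ, hpj, this]; simp
  · ext
    have : q (σ (Multiplicative.ofAdd (Pi.single i 1))) = 1 := hj (by rw [hqj, hσ, div_self', map_one])
    rw [hΦ, this, hσ, zhomAux_single]; simp
  · simp only [hΦ]
    exact laurent_indep n k s (fun i => ((χ (q (g i)) : kˣ) : k)) (fun i _ => Units.ne_zero _) _ hs hne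

lemma subfield_top (n : ℕ) (k : Type) [Field k] (S : Subfield (LFld n k))
    (h1 : ∀ c, Cc n k c ∈ S) (h2 : ∀ i, (Xu n k i : LFld n k) ∈ S) (x : LFld n k) : x ∈ S := by
  have : ∀ p : MvPolynomial (Fin n) k, algebraMap _ (LFld n k) p ∈ S := by
    intro p
    induction p using MvPolynomial.induction_on with
    | C a => exact h1 a
    | add p q hp hq => rw [map_add]; exact add_mem hp hq
    | mul_X p i hp => rw [map_mul]; exact mul_mem hp (h2 i)
  obtain ⟨p, q, hq, rfl⟩ := IsFractionRing.div_surjective (A := MvPolynomial (Fin n) k) x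
  exact div_mem (this p) (this q)

lemma residue_equiv {R L : Type} [CommRing R] [Field L] (P : Ideal R) [hp : P.IsPrime]
    (φ : R →+* L) (hφ : ∀ r, φ r = 0 ↔ r ∈ P)
    (hS : ∀ S : Subfield L, (∀ r, φ r ∈ S) → ∀ x, x ∈ S) :
    ∃ e : IsLocalRing.ResidueField (Localization.AtPrime P) ≃+* L,
      ∀ r, e (IsLocalRing.residue _ (algebraMap R (Localization.AtPrime P) r)) = φ r := by
  have hu : ∀ y : P.primeCompl, IsUnit (φ y) := fun y => by
    rw [isUnit_iff_ne_zero, Ne, hφ]; exact y.2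
  let φ' : Localization.AtPrime P →+* L := IsLocalization.lift (M := P.primeCompl) hu
  have hφ' : ∀ r, φ' (algebraMap R _ r) = φ r := fun r => IsLocalization.lift_eq hu r
  have hloc : IsLocalHom φ' := ⟨fun a ha => by
    obtain ⟨r, s, rfl⟩ := IsLocalization.exists_mk'_eq P.primeCompl a
    rw [IsLocalization.AtPrime.isUnit_mk'_iff (Localization.AtPrime P) P]
    rw [isUnit_iff_ne_zero] at ha
    intro hr
    apply ha
    rw [IsLocalization.lift_mk', (hφ r).2 hr, zero_mul]⟩
  let e₀ : IsLocalRing.ResidueField (Localization.AtPrime P) →+* L := IsLocalRing.ResidueField.lift φ'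
  have he : ∀ r, e₀ (IsLocalRing.residue _ (algebraMap R (Localization.AtPrime P) r)) = φ r :=
    fun r => by rw [← hφ']; rfl
  refine ⟨RingEquiv.ofBijective e₀ ⟨e₀.injective, fun x => ?_⟩, he⟩
  have := hS e₀.fieldRange (fun r => ⟨_, he r⟩) x
  exact this

lemma lift_tensor {B A M L : Type} [CommRing B] [CommRing A] [CommRing M] [CommRing L]
    [Algebra B A] [Algebra B M] (α : A →+* L) (β : M →+* L)
    (h : α.comp (algebraMap B A) = β.comp (algebraMap B M)) :
    ∃ θ : A ⊗[B] M →+* L, ∀ a b, θ (a ⊗ₜ b) = α a * β b := by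
  let _ : Algebra B L := (α.comp (algebraMap B A)).toAlgebra
  let α' : A →ₐ[B] L := { α with commutes' := fun r => rfl }
  let β' : M →ₐ[B] L := { β with commutes' := fun r => (RingHom.congr_fun h r).symm }
  exact ⟨(Algebra.TensorProduct.productMap α' β').toRingHom, fun a b =>
    Algebra.TensorProduct.productMap_apply_tmul α' β' a b⟩

/-- normal form: sums over distinct cosets -/
lemma nf_sum {R Λ G : Type} [CommRing R] [CommGroup Λ] [CommGroup G] (V : Submonoid Λ)
    (ι : V →* R) (p : Λ →* G)
    (hgen : ∀ r, r ∈ AddSubmonoid.closure (Set.range ι))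
    (hadd : ∀ v w : V, p v = p w →
      ι v + ι w = 0 ∨ ∃ t : V, p t = p v ∧ ι v + ι w = ι t) (r : R) :
    ∃ s : Finset V, Set.InjOn (fun v : V => p v) s ∧ r = ∑ v ∈ s, ι v := by
  classical
  induction hgen r using AddSubmonoid.closure_induction_left with
  | zero => exact ⟨∅, by simp, by simp⟩
  | add_left x hx y hy ih =>
    obtain ⟨v, rfl⟩ := hx
    obtain ⟨s, hs, rfl⟩ := ih
    by_cases hv : ∃ w ∈ s, p w = p v
    · obtain ⟨w, hw, hwv⟩ := hv
      have hse : Set.InjOn (fun v : V => p v) (s.erase w) :=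
        hs.mono (by simp)
      rw [← Finset.add_sum_erase s _ hw, ← add_assoc]
      rcases hadd v w hwv.symm with h | ⟨t, ht, h⟩
      · exact ⟨s.erase w, hse, by rw [h, zero_add]⟩
      · have hne : ∀ x ∈ s.erase w, p x ≠ p t := fun x hx hxt => by
          rw [Finset.mem_erase] at hx
          exact hx.1 (hs hx.2 hw (by simp only; rw [hxt, ht, hwv]))
        refine ⟨insert t (s.erase w), ?_, ?_⟩
        · rw [Finset.coe_insert, Set.injOn_insert]
          · refine ⟨hse, ?_⟩
            rintro ⟨x, hx, hxt⟩
            exact hne x hx hxt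
          · intro h; exact hne t h rfl
        · rw [Finset.sum_insert, h]
          intro h; exact hne t h rfl
    · push Not at hv
      refine ⟨insert v s, ?_, ?_⟩
      · rw [Finset.coe_insert, Set.injOn_insert]
        · refine ⟨hs, ?_⟩
          rintro ⟨x, hx, hxt⟩
          exact hv x hx hxt
        · intro h; exact hv v h rfl
      · rw [Finset.sum_insert]
        intro h; exact hv v h rfl

/-- minimal element of finite set -/
lemma exists_min {Λ : Type} [CommGroup Λ] (V : Submonoid Λ) (hV : ∀ x : Λ, x ∈ V ∨ x⁻¹ ∈ V)
    (s : Finset V) (hs : s.Nonempty) : ∃ v ∈ s, ∀ w ∈ s, (w : Λ) / v ∈ V := by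
  classical
  induction hs using Finset.Nonempty.cons_induction with
  | singleton a => exact ⟨a, by simp, by simp⟩
  | cons a s ha hs ih =>
    obtain ⟨v, hv, h⟩ := ih
    rcases hV (a / v) with h1 | h1
    · refine ⟨v, by simp [hv], fun w hw => ?_⟩
      rw [Finset.mem_cons] at hw
      rcases hw with rfl | hw
      · exact h1
      · exact h w hw
    · refine ⟨a, by simp, fun w hw => ?_⟩
      rw [Finset.mem_cons] at hw
      rcases hw with rfl | hw
      · simp
      · have := V.mul_mem (h w hw) h1
        rwa [inv_div, div_mul_div_cancel] at this

lemma nf_mul {R Λ G : Type} [CommRing R] [CommGroup Λ] [CommGroup G] (V : Submonoid Λ)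
    (hV : ∀ x : Λ, x ∈ V ∨ x⁻¹ ∈ V)
    (ι : V →* R) (p : Λ →* G) (P : R → Prop)
    (hP : ∀ s : Finset V, Set.InjOn (fun v : V => p v) s → 1 ∈ s → P (∑ v ∈ s, ι v))
    (r : R)
    (hr : ∃ s : Finset V, Set.InjOn (fun v : V => p v) s ∧ r = ∑ v ∈ s, ι v) :
    r = 0 ∨ ∃ v y, P y ∧ r = ι v * y := by
  classical
  obtain ⟨s, hs, rfl⟩ := hr
  rcases s.eq_empty_or_nonempty with rfl | hne
  · left; simp
  right
  obtain ⟨v, hv, hmin⟩ := exists_min V hV s hne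
  let g : s → V := fun w => ⟨(w : Λ) / v, hmin w.1 w.2⟩
  have hg : Function.Injective g := fun a b hab => by
    have := congrArg Subtype.val hab
    simp only [g] at this
    exact Subtype.ext (Subtype.ext (div_left_injective this))
  refine ⟨v, ∑ w ∈ s.attach.map ⟨g, hg⟩, ι w, hP _ ?_ ?_, ?_⟩
  · intro a ha b hb hab
    simp only [Finset.coe_map, Set.mem_image, Function.Embedding.coeFn_mk] at ha hb
    obtain ⟨a', _, rfl⟩ := ha
    obtain ⟨b', _, rfl⟩ := hb
    simp only [g, map_div, div_left_inj] at hab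
    congr 1
    exact Subtype.ext (hs a'.2 b'.2 hab)
  · simp only [Finset.mem_map, Finset.mem_attach, true_and]
    exact ⟨⟨v, hv⟩, Subtype.ext (div_self' _)⟩
  · rw [Finset.sum_map, Finset.mul_sum, ← Finset.sum_attach]
    refine Finset.sum_congr rfl fun w _ => ?_
    rw [← map_mul]
    congr 1
    exact Subtype.ext (mul_div_cancel _ _).symm

lemma val_part {R Λ : Type} [CommRing R] [IsDomain R] [CommGroup Λ] (V : Submonoid Λ)
    (hV : ∀ x : Λ, x ∈ V ∨ x⁻¹ ∈ V) (W : Subgroup Λ) (hW : ∀ x : Λ, x ∈ W ↔ x ∈ V ∧ x⁻¹ ∈ V)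
    (ι : V →* R) (P : Ideal R) [hp : P.IsPrime]
    (h0 : ∀ v, ι v ≠ 0) (hP : ∀ v, ι v ∈ P ↔ (v : Λ) ∉ W)
    (hnf : ∀ r, r = 0 ∨ ∃ v y, y ∉ P ∧ r = ι v * y) :
    (∃ hd : IsDomain (Localization.AtPrime P),
          @ValuationRing (Localization.AtPrime P) _ hd) ∧
        (∀ (F : Type) [Field F] [Algebra (Localization.AtPrime P) F]
          [IsFractionRing (Localization.AtPrime P) F],
          ∃ ψ : (Fˣ ⧸ (Units.map
              (algebraMap (Localization.AtPrime P) F).toMonoidHom).range) ≃* (Λ ⧸ W),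
            ∀ x : Fˣ,
              ((∃ r : Localization.AtPrime P,
                  algebraMap (Localization.AtPrime P) F r = (x : F)) ↔
                ∃ v ∈ V, (QuotientGroup.mk v : Λ ⧸ W) = ψ (QuotientGroup.mk x))) := by
  have hd : IsDomain (Localization.AtPrime P) :=
    IsLocalization.isDomain_localization P.primeCompl_le_nonZeroDivisors
  set O := Localization.AtPrime P with hO
  have hinj : Function.Injective (algebraMap R O) :=
    IsLocalization.injective _ P.primeCompl_le_nonZeroDivisors
  have nfO : ∀ x : O, x = 0 ∨ ∃ (v : V) (u : Oˣ), x = algebraMap R O (ι v) * u := by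
    intro x
    obtain ⟨r, s, rfl⟩ := IsLocalization.exists_mk'_eq P.primeCompl x
    rcases hnf r with rfl | ⟨v, y, hy, rfl⟩
    · left; simp
    · right
      have hu : IsUnit (IsLocalization.mk' O y s) := by
        rw [IsLocalization.AtPrime.isUnit_mk'_iff O P]
        exact hy
      refine ⟨v, hu.unit, ?_⟩
      rw [IsUnit.unit_spec, IsLocalization.mul_mk'_eq_mk'_of_mul]
  have unitO : ∀ v : V, (v : Λ) ∈ W → IsUnit (algebraMap R O (ι v)) := fun v hv => by
    rw [IsLocalization.AtPrime.isUnit_to_map_iff O P]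
    intro h
    exact (hP v).1 h hv
  have unitO' : ∀ v : V, IsUnit (algebraMap R O (ι v)) → (v : Λ) ∈ W := fun v hv => by
    rw [IsLocalization.AtPrime.isUnit_to_map_iff O P] at hv
    by_contra h
    exact hv ((hP v).2 h)
  refine ⟨⟨hd, ?_⟩, ?_⟩
  · have : ∀ a b : O, a ∣ b ∨ b ∣ a := by
      intro a b
      rcases nfO a with rfl | ⟨v, u, rfl⟩
      · right; exact dvd_zero _
      rcases nfO b with rfl | ⟨w, t, rfl⟩
      · left; exact dvd_zero _
      simp only [Units.dvd_mul_right, Units.mul_right_dvd]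
      rcases hV (w / v) with h | h
      · left
        refine (map_dvd (algebraMap R O)) (map_dvd ι ⟨⟨_, h⟩, Subtype.ext (mul_div_cancel _ _).symm⟩)
      · right
        rw [inv_div] at h
        refine (map_dvd (algebraMap R O)) (map_dvd ι ⟨⟨_, h⟩, Subtype.ext (mul_div_cancel _ _).symm⟩)
    exact ValuationRing.iff_dvd_total.2 ⟨this⟩
  · intro F _ _ _
    have hF0 : ∀ v, algebraMap O F (algebraMap R O (ι v)) ≠ 0 := fun v h => by
      rw [FaithfulSMul.algebraMap_eq_zero_iff] at h
      exact h0 v (hinj (by rw [h, map_zero]))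
    let j : V →* Fˣ :=
      { toFun := fun v => Units.mk0 _ (hF0 v)
        map_one' := by ext; simp
        map_mul' := fun a b => by ext; simp }
    have hj : ∀ v, (j v : F) = algebraMap O F (algebraMap R O (ι v)) := fun v => rfl
    have hrep : ∀ x : Λ, ∃ a b : V, x * b = a := fun x => by
      rcases hV x with h | h
      · exact ⟨⟨x, h⟩, 1, by simp⟩
      · exact ⟨1, ⟨x⁻¹, h⟩, by simp⟩
    choose na nb hn using hrep
    have hwd : ∀ (x : Λ) (a b : V), x * b = a → j (na x) / j (nb x) = j a / j b := by
      intro x a b h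
      rw [div_eq_div_iff_mul_eq_mul, ← map_mul, ← map_mul]
      congr 1
      apply Subtype.ext
      simp only [Submonoid.coe_mul]
      rw [← h, ← hn x]
      ac_rfl
    let γ : Λ →* Fˣ :=
      { toFun := fun x => j (na x) / j (nb x)
        map_one' := by rw [hwd 1 1 1 (by simp)]; simp
        map_mul' := fun x y => by
          rw [hwd (x * y) (na x * na y) (nb x * nb y), map_mul, map_mul, mul_div_mul_comm]
          simp only [Submonoid.coe_mul]
          rw [← hn x, ← hn y]
          ac_rfl }
    have hγ : ∀ v : V, γ v = j v := fun v => by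
      have := hwd v v 1 (by simp)
      rw [map_one, div_one] at this
      exact this
    set U : Subgroup Fˣ := (Units.map (algebraMap O F).toMonoidHom).range with hU
    have hUmem : ∀ (u : Oˣ) , Units.map (algebraMap O F).toMonoidHom u ∈ U := fun u => ⟨u, rfl⟩
    let Γ : Λ →* Fˣ ⧸ U := (QuotientGroup.mk' U).comp γ
    have nfF : ∀ x : Fˣ, ∀ r : O, algebraMap O F r = x → ∃ v : V, Γ v = QuotientGroup.mk x := by
      intro x r hr
      rcases nfO r with rfl | ⟨v, u, rfl⟩
      · exfalso; apply x.ne_zero; rw [← hr, map_zero]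
      · refine ⟨v, ?_⟩
        change (QuotientGroup.mk (γ v) : Fˣ ⧸ U) = QuotientGroup.mk x
        rw [QuotientGroup.eq]
        convert hUmem u
        rw [inv_mul_eq_iff_eq_mul, hγ]
        ext
        rw [← hr, map_mul]
        rfl
    have hsurj : Function.Surjective Γ := by
      intro q
      obtain ⟨x, rfl⟩ := QuotientGroup.mk_surjective q
      obtain ⟨a, b, hb, hab⟩ := IsFractionRing.div_surjective (A := O) (x : F)
      have hb0 : algebraMap O F b ≠ 0 := by
        rw [Ne, FaithfulSMul.algebraMap_eq_zero_iff]; exact nonZeroDivisors.ne_zero hb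
      have ha0 : algebraMap O F a ≠ 0 := by
        intro h; apply x.ne_zero; rw [← hab, h, zero_div]
      obtain ⟨v, hv⟩ := nfF (Units.mk0 _ ha0) a rfl
      obtain ⟨w, hw⟩ := nfF (Units.mk0 _ hb0) b rfl
      refine ⟨v / w, ?_⟩
      rw [map_div, hv, hw, ← QuotientGroup.mk_div]
      congr 1
      ext
      simp [hab]
    have hkerV : ∀ v : V, γ v ∈ U ↔ (v : Λ) ∈ W := by
      intro v
      rw [hγ]
      constructor
      · rintro ⟨u, hu⟩
        apply unitO'
        have := congrArg Units.val hu
        rw [hj] at this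
        rw [← FaithfulSMul.algebraMap_injective O F this]
        exact u.isUnit
      · intro h
        exact ⟨(unitO v h).unit, by ext; rfl⟩
    have hker : Γ.ker = W := by
      ext x
      have : x ∈ Γ.ker ↔ γ x ∈ U := by
        rw [MonoidHom.mem_ker]
        exact QuotientGroup.eq_one_iff _
      rw [this]
      rcases hV x with h | h
      · exact hkerV ⟨x, h⟩
      · have := hkerV ⟨_, h⟩
        simpa using this
    let ψ : (Λ ⧸ W) ≃* (Fˣ ⧸ U) :=
      (QuotientGroup.quotientMulEquivOfEq hker.symm).trans
        (QuotientGroup.quotientKerEquivOfSurjective Γ hsurj)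
    have hψ : ∀ x : Λ, ψ (QuotientGroup.mk x) = Γ x := fun x => rfl
    refine ⟨ψ.symm, fun x => ?_⟩
    constructor
    · rintro ⟨r, hr⟩
      obtain ⟨v, hv⟩ := nfF x r hr
      refine ⟨v, v.2, ?_⟩
      rw [MulEquiv.eq_symm_apply, hψ, hv]
    · rintro ⟨v, hv, h⟩
      rw [MulEquiv.eq_symm_apply, hψ] at h
      have h' : (QuotientGroup.mk (γ v) : Fˣ ⧸ U) = QuotientGroup.mk x := h
      rw [QuotientGroup.eq] at h'
      obtain ⟨u, hu⟩ := h'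
      rw [eq_inv_mul_iff_mul_eq] at hu
      refine ⟨algebraMap R O (ι ⟨v, hv⟩) * u, ?_⟩
      rw [← hu, map_mul, Units.val_mul, hγ ⟨v, hv⟩]
      rfl

/-- Let `A` be a Henselian valuation ring which is not a field, with fraction field `K` and
residue field `k`.  Let `Λ` be an abelian group containing `Kˣ` (via an injective
homomorphism `f`) with `Λ/Kˣ` free of finite rank, and let `V` be a valuative submonoid of
`Λ` dominating the valuative submonoid `V₀ := A∖{0}` of `Kˣ`.  Let
`R := A ⊗_{ℤ[V₀]} ℤ[V]` and let `𝔭` be the ideal of `R` generated by the image of `V∖Vˣ`.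
Then `𝔭` is prime and the localization `R_𝔭` is a valuation ring whose value group is
isomorphic, as an ordered abelian group, to `Λ/Vˣ` (with nonnegative cone the image of
`V`; here `W = Vˣ` is the subgroup of invertible elements of `V`), and whose residue field
is isomorphic as a `k`-algebra to the rational function field over `k` in `m` variables,
where `m` is the rank of the free abelian group `Vˣ/Aˣ` (here `UA` is the image of `Aˣ`
in `Λ`). -/
theorem tensor_monoidAlgebra_localization_valueGroup_and_residueField
    {A K : Type} [CommRing A] [IsDomain A] [ValuationRing A] [HenselianLocalRing A]
    (hA : ¬IsField A)
    [Field K] [Algebra A K] [IsFractionRing A K]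
    {Λ : Type} [CommGroup Λ] (f : Kˣ →* Λ) (hf : Function.Injective f)
    (n : ℕ) (hfree : Nonempty ((Λ ⧸ f.range) ≃* Multiplicative (Fin n → ℤ)))
    (V₀ : Submonoid Λ)
    (hV₀ : V₀ = Submonoid.map f
      (Submonoid.comap (Units.coeHom K) (algebraMap A K).range.toSubmonoid))
    (V : Submonoid Λ) (hVval : ∀ x : Λ, x ∈ V ∨ x⁻¹ ∈ V)
    (hle : V₀ ≤ V)
    (hdom : {x : Λ | x ∈ V ∧ x⁻¹ ∈ V} ∩ (V₀ : Set Λ) = {x : Λ | x ∈ V₀ ∧ x⁻¹ ∈ V₀})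
    (W : Subgroup Λ) (hW : ∀ x : Λ, x ∈ W ↔ x ∈ V ∧ x⁻¹ ∈ V)
    (UA : Subgroup Λ)
    (hUA : ∀ x : Λ, x ∈ UA ↔ ∃ u : Kˣ,
      (∃ a : Aˣ, algebraMap A K ((a : A)) = (u : K)) ∧ f u = x)
    (m : ℕ)
    (hm : Nonempty ((↥W ⧸ UA.subgroupOf W) ≃* Multiplicative (Fin m → ℤ))) :
    ∀ [instA : Algebra (MonoidAlgebra ℤ ↥V₀) A],
      (∀ (x : ↥V₀) (u : Kˣ) (a : A), f u = (x : Λ) → algebraMap A K a = (u : K) →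
        algebraMap (MonoidAlgebra ℤ ↥V₀) A (MonoidAlgebra.of ℤ ↥V₀ x) = a) →
    ∀ [instM : Algebra (MonoidAlgebra ℤ ↥V₀) (MonoidAlgebra ℤ ↥V)],
      (∀ x : ↥V₀, algebraMap (MonoidAlgebra ℤ ↥V₀) (MonoidAlgebra ℤ ↥V)
          (MonoidAlgebra.of ℤ ↥V₀ x) = MonoidAlgebra.of ℤ ↥V (Submonoid.inclusion hle x)) →
    ∀ 𝔭 : Ideal (A ⊗[MonoidAlgebra ℤ ↥V₀] MonoidAlgebra ℤ ↥V),
      𝔭 = Ideal.span {r : A ⊗[MonoidAlgebra ℤ ↥V₀] MonoidAlgebra ℤ ↥V | ∃ v : ↥V,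
          ((v : Λ)⁻¹ ∉ V) ∧
          r = (1 : A) ⊗ₜ[MonoidAlgebra ℤ ↥V₀] MonoidAlgebra.of ℤ ↥V v} →
      𝔭.IsPrime ∧
      ∀ [hp : 𝔭.IsPrime],
        (∃ hd : IsDomain (Localization.AtPrime 𝔭),
          @ValuationRing (Localization.AtPrime 𝔭) _ hd) ∧
        (∀ (F : Type) [Field F] [Algebra (Localization.AtPrime 𝔭) F]
          [IsFractionRing (Localization.AtPrime 𝔭) F],
          ∃ ψ : (Fˣ ⧸ (Units.map
              (algebraMap (Localization.AtPrime 𝔭) F).toMonoidHom).range) ≃* (Λ ⧸ W),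
            ∀ x : Fˣ,
              ((∃ r : Localization.AtPrime 𝔭,
                  algebraMap (Localization.AtPrime 𝔭) F r = (x : F)) ↔
                ∃ v ∈ V, (QuotientGroup.mk v : Λ ⧸ W) = ψ (QuotientGroup.mk x))) ∧
        (∃ e : IsLocalRing.ResidueField (Localization.AtPrime 𝔭) ≃+*
            FractionRing (MvPolynomial (Fin m) (IsLocalRing.ResidueField A)),
          ∀ a : A,
            e (IsLocalRing.residue (Localization.AtPrime 𝔭)
                (algebraMap (A ⊗[MonoidAlgebra ℤ ↥V₀] MonoidAlgebra ℤ ↥V)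
                  (Localization.AtPrime 𝔭)
                  (a ⊗ₜ[MonoidAlgebra ℤ ↥V₀] (1 : MonoidAlgebra ℤ ↥V)))) =
              algebraMap (MvPolynomial (Fin m) (IsLocalRing.ResidueField A))
                (FractionRing (MvPolynomial (Fin m) (IsLocalRing.ResidueField A)))
                (MvPolynomial.C (IsLocalRing.residue A a))) := by
  intro instA hinstA instM hinstM 𝔭 h𝔭
  classical
  obtain ⟨eΛ⟩ := hfree
  obtain ⟨eW⟩ := hm
  let p : Λ →* Multiplicative (Fin n → ℤ) := eΛ.toMonoidHom.comp (QuotientGroup.mk' f.range)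
  have hpsurj : Function.Surjective p := eΛ.surjective.comp (QuotientGroup.mk'_surjective _)
  have hpker : p.ker = f.range := by
    ext x
    rw [MonoidHom.mem_ker]
    change eΛ (QuotientGroup.mk x) = 1 ↔ _
    rw [map_eq_one_iff eΛ eΛ.injective, QuotientGroup.eq_one_iff]
  let pW : W →* Multiplicative (Fin m → ℤ) :=
    eW.toMonoidHom.comp (QuotientGroup.mk' (UA.subgroupOf W))
  have hpWsurj : Function.Surjective pW := eW.surjective.comp (QuotientGroup.mk'_surjective _)
  have hpWker : pW.ker = UA.subgroupOf W := by
    ext x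
    rw [MonoidHom.mem_ker]
    change eW (QuotientGroup.mk x) = 1 ↔ _
    rw [map_eq_one_iff eW eW.injective, QuotientGroup.eq_one_iff]
  have hV0mem : ∀ x, x ∈ V₀ ↔ ∃ (u : Kˣ) (a : A), algebraMap A K a = u ∧ f u = x := by
    intro x
    rw [hV₀, Submonoid.mem_map]
    constructor
    · rintro ⟨u, ⟨a, ha⟩, rfl⟩
      exact ⟨u, a, ha, rfl⟩
    · rintro ⟨u, a, ha, rfl⟩
      exact ⟨u, ⟨a, ha⟩, rfl⟩
  have hAinj : Function.Injective (algebraMap A K) := IsFractionRing.injective A K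
  -- elements of `V₀` in `W` are units of `A`
  have hV0W : ∀ (u : Kˣ) (a : A), algebraMap A K a = u → (f u ∈ W ↔ IsUnit a) := by
    intro u a ha
    have hu0 : f u ∈ V₀ := (hV0mem _).2 ⟨u, a, ha, rfl⟩
    constructor
    · intro h
      have h2 : f u ∈ {x : Λ | x ∈ V₀ ∧ x⁻¹ ∈ V₀} := by
        rw [← hdom]
        exact ⟨(hW _).1 h, hu0⟩
      obtain ⟨u', a', ha', hu'⟩ := (hV0mem _).1 h2.2
      rw [← map_inv] at hu'
      have := hf hu'
      subst this
      refine IsUnit.of_mul_eq_one a' (hAinj ?_)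
      rw [map_mul, ha, ha', map_one]
      simp
    · rintro ⟨b, rfl⟩
      rw [hW]
      refine ⟨hle hu0, hle ((hV0mem _).2 ⟨u⁻¹, (b⁻¹ : Aˣ), ?_, by simp⟩)⟩
      rw [map_units_inv, ha]
      simp
  let jA : Aˣ →* Λ := f.comp (Units.map (algebraMap A K).toMonoidHom)
  have hjAinj : Function.Injective jA :=
    hf.comp (Units.map_injective hAinj)
  have hjAW : ∀ a, jA a ∈ W := fun a => (hV0W _ (a : A) rfl).2 a.isUnit
  let jW : Aˣ →* W := jA.codRestrict W hjAW
  have hjWinj : Function.Injective jW := fun a b h => hjAinj (congrArg Subtype.val h)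
  have hjWr : pW.ker = jW.range := by
    rw [hpWker]
    ext x
    rw [Subgroup.mem_subgroupOf, hUA]
    constructor
    · rintro ⟨u, ⟨a, ha⟩, hu⟩
      refine ⟨a, Subtype.ext ?_⟩
      rw [← hu]
      change f _ = f u
      congr 1
      ext
      exact ha
    · rintro ⟨a, rfl⟩
      exact ⟨_, ⟨a, rfl⟩, rfl⟩
  obtain ⟨Θ, hΘ1, -, hΘ3⟩ := exists_char (k := K) p hpsurj f hf hpker (MonoidHom.id _)
  obtain ⟨Φ, hΦ1, hΦ2, hΦ3⟩ := exists_char (k := IsLocalRing.ResidueField A) pW hpWsurj jW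
    hjWinj hjWr (Units.map (IsLocalRing.residue A).toMonoidHom)
  let ι : V →* (A ⊗[MonoidAlgebra ℤ ↥V₀] MonoidAlgebra ℤ ↥V) :=
    (Algebra.TensorProduct.includeRight (R := MonoidAlgebra ℤ ↥V₀) (A := A)
      (B := MonoidAlgebra ℤ ↥V)).toRingHom.toMonoidHom.comp (MonoidAlgebra.of ℤ V)
  have hι : ∀ v, ι v = (1 : A) ⊗ₜ[MonoidAlgebra ℤ ↥V₀] MonoidAlgebra.of ℤ ↥V v := fun v => rfl
  have hfV : ∀ (u : Kˣ) (a : A), algebraMap A K a = u → f u ∈ V :=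
    fun u a h => hle ((hV0mem _).2 ⟨u, a, h, rfl⟩)
  have h1 : ∀ (u : Kˣ) (a : A) (h : algebraMap A K a = u) (b : MonoidAlgebra ℤ ↥V),
      a ⊗ₜ[MonoidAlgebra ℤ ↥V₀] b = ι ⟨f u, hfV u a h⟩ * ((1 : A) ⊗ₜ[MonoidAlgebra ℤ ↥V₀] b) := by
    intro u a h b
    have e1 := hinstA ⟨f u, (hV0mem _).2 ⟨u, a, h, rfl⟩⟩ u a rfl h
    rw [hι, Algebra.TensorProduct.tmul_mul_tmul, one_mul]
    have e2 : a ⊗ₜ[MonoidAlgebra ℤ ↥V₀] b = (algebraMap (MonoidAlgebra ℤ ↥V₀) A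
        (MonoidAlgebra.of ℤ ↥V₀ ⟨f u, (hV0mem _).2 ⟨u, a, h, rfl⟩⟩)) ⊗ₜ[MonoidAlgebra ℤ ↥V₀] b :=
      congrArg (fun t : A => t ⊗ₜ[MonoidAlgebra ℤ ↥V₀] b) e1.symm
    rw [e2, Algebra.algebraMap_eq_smul_one, TensorProduct.smul_tmul, Algebra.smul_def, hinstM]
    rfl
  have h1' : ∀ (u : Kˣ) (a : A) (h : algebraMap A K a = u) (v : V),
      a ⊗ₜ[MonoidAlgebra ℤ ↥V₀] (MonoidAlgebra.of ℤ ↥V v) = ι (⟨f u, hfV u a h⟩ * v) := by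
    intro u a h v
    rw [h1 u a h, map_mul ι]
    rfl
  have hexu : ∀ a : A, a ≠ 0 → ∃ u : Kˣ, algebraMap A K a = u := fun a ha =>
    ⟨Units.mk0 _ (by rwa [Ne, FaithfulSMul.algebraMap_eq_zero_iff]), rfl⟩
  have hgen : ∀ r, r ∈ AddSubmonoid.closure (Set.range ι) := by
    intro r
    induction r using TensorProduct.induction_on with
    | zero => exact zero_mem _
    | add x y hx hy => exact add_mem hx hy
    | tmul a b =>
      have hb : ∀ (a : A) (v : V), a ⊗ₜ[MonoidAlgebra ℤ ↥V₀] (MonoidAlgebra.of ℤ ↥V v) ∈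
          AddSubmonoid.closure (Set.range ι) := by
        intro a v
        by_cases ha : a = 0
        · rw [ha, TensorProduct.zero_tmul]; exact zero_mem _
        · obtain ⟨u, hu⟩ := hexu a ha
          rw [h1' u a hu]
          exact AddSubmonoid.subset_closure ⟨_, rfl⟩
      have hb' : ∀ (z : ℤ) (b : MonoidAlgebra ℤ ↥V),
          (∀ a : A, a ⊗ₜ[MonoidAlgebra ℤ ↥V₀] b ∈ AddSubmonoid.closure (Set.range ι)) →
          (∀ a : A, a ⊗ₜ[MonoidAlgebra ℤ ↥V₀] (z • b) ∈ AddSubmonoid.closure (Set.range ι)) := by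
        intro z b h a
        have : a ⊗ₜ[MonoidAlgebra ℤ ↥V₀] (z • b) = (z • a) ⊗ₜ[MonoidAlgebra ℤ ↥V₀] b :=
          (TensorProduct.smul_tmul z a b).symm
        rw [this]
        exact h _
      have : ∀ a : A, a ⊗ₜ[MonoidAlgebra ℤ ↥V₀] b ∈ AddSubmonoid.closure (Set.range ι) := by
        induction b using MonoidAlgebra.induction_on with
        | of v => exact fun a => hb a v
        | add x y hx hy =>
          intro a
          rw [TensorProduct.tmul_add]; exact add_mem (hx a) (hy a)
        | smul z x hx => exact hb' z x hx
      exact this a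
  have hadd0 : ∀ v w : V, (∃ u : Kˣ, f u = (w : Λ) / v) → (w : Λ) / v ∈ V →
      ι v + ι w = 0 ∨ ∃ t : V, p t = p v ∧ ι v + ι w = ι t := by
    rintro v w ⟨u, hu⟩ hwv
    obtain ⟨a, ha⟩ : ∃ a, algebraMap A K a = u := by
      rcases ValuationRing.isInteger_or_isInteger A (u : K) with ⟨a, ha⟩ | ⟨a, ha⟩
      · exact ⟨a, ha⟩
      · have ha' : algebraMap A K a = (u⁻¹ : Kˣ) := by rw [ha]; simp
        have : IsUnit a := by
          rw [← hV0W _ a ha', hW]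
          refine ⟨hfV _ _ ha', ?_⟩
          rw [map_inv, inv_inv, hu]
          exact hwv
        obtain ⟨b, rfl⟩ := this
        refine ⟨(b⁻¹ : Aˣ), ?_⟩
        rw [map_units_inv, ha']
        simp
    have hw : w = ⟨f u, hfV u a ha⟩ * v := by
      apply Subtype.ext
      simp only [Submonoid.coe_mul]
      rw [hu, div_mul_cancel]
    have hsum : ι v + ι w = (1 + a) ⊗ₜ[MonoidAlgebra ℤ ↥V₀] (MonoidAlgebra.of ℤ ↥V v) := by
      rw [hw, ← h1' u a ha, hι, ← TensorProduct.add_tmul]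
    rw [hsum]
    by_cases h0 : 1 + a = 0
    · left; rw [h0, TensorProduct.zero_tmul]
    · right
      obtain ⟨u', hu'⟩ := hexu _ h0
      refine ⟨_, ?_, h1' u' _ hu' v⟩
      simp only [Submonoid.coe_mul, map_mul]
      rw [show p (f u') = 1 from ?_, one_mul]
      rw [← MonoidHom.mem_ker, hpker]
      exact ⟨_, rfl⟩
  have hpeq : ∀ x y : Λ, p x = p y → ∃ u : Kˣ, f u = x / y := by
    intro x y h
    have : x / y ∈ p.ker := by rw [MonoidHom.mem_ker, map_div, h, div_self']
    rw [hpker] at this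
    exact this
  have hadd : ∀ v w : V, p v = p w →
      ι v + ι w = 0 ∨ ∃ t : V, p t = p v ∧ ι v + ι w = ι t := by
    intro v w h
    rcases hVval ((w : Λ) / v) with h' | h'
    · exact hadd0 v w (hpeq _ _ h.symm) h'
    · rw [inv_div] at h'
      rw [add_comm, h]
      exact hadd0 w v (hpeq _ _ h) h'
  have hnfs := nf_sum V ι p hgen hadd
  -- the map `θ`
  obtain ⟨θ, hθ⟩ : ∃ θ : (A ⊗[MonoidAlgebra ℤ ↥V₀] MonoidAlgebra ℤ ↥V) →+* LFld n K,
      ∀ v : V, θ (ι v) = Θ v := by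
    let βm : V →* LFld n K := (Units.coeHom _).comp (Θ.comp V.subtype)
    let β : MonoidAlgebra ℤ ↥V →+* LFld n K := (MonoidAlgebra.lift ℤ (LFld n K) V βm).toRingHom
    have hβ : ∀ v, β (MonoidAlgebra.of ℤ V v) = Θ v := fun v => MonoidAlgebra.lift_of βm v
    obtain ⟨θ, hθ⟩ := lift_tensor (B := MonoidAlgebra ℤ ↥V₀) (A := A)
      ((Cc n K).comp (algebraMap A K)) β (by
        apply MonoidAlgebra.ringHom_ext'
        · exact RingHom.ext_int _ _
        · ext x
          obtain ⟨u, a, ha, hu⟩ := (hV0mem _).1 x.2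
          change Cc n K (algebraMap A K (algebraMap (MonoidAlgebra ℤ ↥V₀) A
            (MonoidAlgebra.of ℤ ↥V₀ x))) = β (algebraMap _ _ (MonoidAlgebra.of ℤ ↥V₀ x))
          rw [hinstA x u a hu ha, hinstM, hβ, ha]
          change _ = ((Θ (x : Λ) : (LFld n K)ˣ) : LFld n K)
          rw [← hu, hΘ1]
          rfl)
    exact ⟨θ, fun v => by rw [hι, hθ, hβ, map_one, one_mul]⟩
  -- the map `φ`
  have hWmul : ∀ v w : V, (((v * w : V) : Λ) ∈ W ↔ (v : Λ) ∈ W ∧ (w : Λ) ∈ W) := by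
    intro v w
    refine ⟨fun h => ?_, fun h => W.mul_mem h.1 h.2⟩
    have h2 : ((v : Λ) * w)⁻¹ ∈ V := ((hW _).1 h).2
    constructor
    · rw [hW]
      refine ⟨v.2, ?_⟩
      have := V.mul_mem h2 w.2
      rwa [mul_inv, inv_mul_cancel_right] at this
    · rw [hW]
      refine ⟨w.2, ?_⟩
      have := V.mul_mem h2 v.2
      rwa [mul_inv_rev, inv_mul_cancel_right] at this
  obtain ⟨φ, hφA, hφ1, hφ0⟩ : ∃ φ : (A ⊗[MonoidAlgebra ℤ ↥V₀] MonoidAlgebra ℤ ↥V) →+*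
      LFld m (IsLocalRing.ResidueField A),
      (∀ a : A, φ (a ⊗ₜ[MonoidAlgebra ℤ ↥V₀] (1 : MonoidAlgebra ℤ ↥V)) =
        Cc m _ (IsLocalRing.residue A a)) ∧
      (∀ (v : V) (h : (v : Λ) ∈ W), φ (ι v) = Φ ⟨v, h⟩) ∧
      (∀ (v : V) (h : (v : Λ) ∉ W), φ (ι v) = 0) := by
    let βm : V →* LFld m (IsLocalRing.ResidueField A) :=
      { toFun := fun v => if h : (v : Λ) ∈ W then Φ ⟨v, h⟩ else 0
        map_one' := by
          rw [dif_pos (show ((1 : V) : Λ) ∈ W from W.one_mem)]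
          have : (⟨((1 : V) : Λ), W.one_mem⟩ : W) = 1 := rfl
          rw [this, map_one, Units.val_one]
        map_mul' := fun v w => by
          by_cases hv : (v : Λ) ∈ W
          · by_cases hw : (w : Λ) ∈ W
            · rw [dif_pos hv, dif_pos hw, dif_pos ((hWmul v w).2 ⟨hv, hw⟩), ← Units.val_mul,
                ← map_mul]
              rfl
            · rw [dif_neg hw, dif_neg (fun h => hw ((hWmul v w).1 h).2), mul_zero]
          · rw [dif_neg hv, dif_neg (fun h => hv ((hWmul v w).1 h).1), zero_mul] }
    let β : MonoidAlgebra ℤ ↥V →+* LFld m (IsLocalRing.ResidueField A) :=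
      (MonoidAlgebra.lift ℤ (LFld m (IsLocalRing.ResidueField A)) V βm).toRingHom
    have hβ : ∀ v, β (MonoidAlgebra.of ℤ V v) = βm v := fun v => MonoidAlgebra.lift_of βm v
    have hβ1 : ∀ (v : V) (h : (v : Λ) ∈ W), βm v = Φ ⟨v, h⟩ := fun v h => dif_pos h
    have hβ0 : ∀ (v : V) (h : (v : Λ) ∉ W), βm v = 0 := fun v h => dif_neg h
    obtain ⟨θ, hθ⟩ := lift_tensor (B := MonoidAlgebra ℤ ↥V₀) (A := A)
      ((Cc m (IsLocalRing.ResidueField A)).comp (IsLocalRing.residue A)) β (by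
        apply MonoidAlgebra.ringHom_ext'
        · exact RingHom.ext_int _ _
        · ext x
          obtain ⟨u, a, ha, hu⟩ := (hV0mem _).1 x.2
          change Cc m _ (IsLocalRing.residue A (algebraMap (MonoidAlgebra ℤ ↥V₀) A
            (MonoidAlgebra.of ℤ ↥V₀ x))) = β (algebraMap _ _ (MonoidAlgebra.of ℤ ↥V₀ x))
          rw [hinstA x u a hu ha, hinstM, hβ]
          by_cases hxW : (x : Λ) ∈ W
          · rw [hβ1 _ hxW]
            obtain ⟨b, rfl⟩ := (hV0W u a ha).1 (hu ▸ hxW)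
            have e : (⟨((Submonoid.inclusion hle x : V) : Λ), hxW⟩ : W) = jW b := by
              apply Subtype.ext
              change (x : Λ) = f _
              rw [← hu]
              congr 1
              ext
              exact ha.symm
            rw [e, hΦ1]
            rfl
          · rw [hβ0 _ hxW]
            have : ¬ IsUnit a := fun h => hxW (hu ▸ (hV0W u a ha).2 h)
            rw [(IsLocalRing.residue_eq_zero_iff a).2 ((IsLocalRing.mem_maximalIdeal a).2 this),
              map_zero])
    refine ⟨θ, fun a => ?_, fun v h => ?_, fun v h => ?_⟩
    · rw [hθ, map_one, mul_one]; rfl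
    · rw [hι, hθ, hβ, map_one, one_mul, hβ1 v h]
    · rw [hι, hθ, hβ, map_one, one_mul, hβ0 v h]
  have hφsum : ∀ s : Finset V, Set.InjOn (fun v : V => p v) s → 1 ∈ s →
      φ (∑ v ∈ s, ι v) ≠ 0 := by
    intro s hs h1s
    let s' : Finset {v : V // (v : Λ) ∈ W} := s.subtype _
    have e : φ (∑ v ∈ s, ι v) = ∑ v ∈ s', (Φ ⟨v.1, v.2⟩ : LFld m (IsLocalRing.ResidueField A)) := by
      rw [map_sum, ← Finset.sum_filter_add_sum_filter_not s (fun v : V => (v : Λ) ∈ W)]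
      rw [Finset.sum_eq_zero (s := s.filter (fun v : V => (v : Λ) ∉ W))
        (fun v hv => hφ0 v (Finset.mem_filter.1 hv).2), add_zero]
      rw [← Finset.sum_subtype_eq_sum_filter]
      exact Finset.sum_congr rfl fun v hv => hφ1 v.1 v.2
    rw [e]
    apply hΦ3 s' (fun v => (⟨v.1, v.2⟩ : W))
    · intro a ha b hb hab
      simp only at hab
      have : (⟨a.1, a.2⟩ / ⟨b.1, b.2⟩ : W) ∈ pW.ker := by
        rw [MonoidHom.mem_ker, map_div, hab, div_self']
      rw [hjWr] at this
      obtain ⟨c, hc⟩ := this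
      have hc' : jA c = (a.1 : Λ) / b.1 := congrArg Subtype.val hc
      have hk : (a.1 : Λ) / b.1 ∈ p.ker := by rw [hpker, ← hc']; exact ⟨_, rfl⟩
      rw [MonoidHom.mem_ker, map_div, div_eq_one] at hk
      exact Subtype.ext (hs (Finset.mem_subtype.1 ha) (Finset.mem_subtype.1 hb) hk)
    · exact ⟨⟨1, W.one_mem⟩, Finset.mem_subtype.2 h1s⟩
  have hnf0 : ∀ r, r = 0 ∨ ∃ v y, φ y ≠ 0 ∧ r = ι v * y := fun r =>
    nf_mul V hVval ι p (fun y => φ y ≠ 0) hφsum r (hnfs r)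
  have hWV : ∀ v : V, (v : Λ) ∉ W ↔ (v : Λ)⁻¹ ∉ V := fun v => by
    rw [hW]; simp
  have hιp : ∀ v : V, (v : Λ) ∉ W → ι v ∈ 𝔭 := fun v hv => by
    rw [h𝔭]
    exact Ideal.subset_span ⟨v, (hWV v).1 hv, rfl⟩
  have hker : ∀ r, φ r = 0 ↔ r ∈ 𝔭 := by
    intro r
    constructor
    · intro h
      rcases hnf0 r with rfl | ⟨v, y, hy, rfl⟩
      · exact zero_mem _
      · rw [map_mul, mul_eq_zero, or_iff_left hy] at h
        refine Ideal.mul_mem_right _ _ (hιp v fun hv => ?_)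
        rw [hφ1 v hv] at h
        exact Units.ne_zero _ h
    · intro h
      have : 𝔭 ≤ RingHom.ker φ := by
        rw [h𝔭, Ideal.span_le]
        rintro _ ⟨v, hv, rfl⟩
        exact hφ0 v ((hWV v).2 hv)
      exact this h
  have hkereq : 𝔭 = RingHom.ker φ := by
    ext r; exact (hker r).symm
  have hθinj : Function.Injective θ := by
    rw [injective_iff_map_eq_zero]
    intro r hr
    obtain ⟨s, hs, rfl⟩ := hnfs r
    by_contra hne
    refine hΘ3 s (fun v : V => (v : Λ)) hs ?_ ?_
    · rw [Finset.nonempty_iff_ne_empty]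
      rintro rfl
      exact hne (by simp)
    · rw [← hr, map_sum]
      exact Finset.sum_congr rfl fun v _ => (hθ v).symm
  have hdom' : IsDomain (A ⊗[MonoidAlgebra ℤ ↥V₀] MonoidAlgebra ℤ ↥V) :=
    hθinj.isDomain θ
  have hprime : 𝔭.IsPrime := by
    rw [hkereq]; exact RingHom.ker_isPrime φ
  refine ⟨hprime, ?_⟩
  intro hp
  have hv := val_part V hVval W hW ι 𝔭
    (fun v h => Units.ne_zero (Θ v) (by rw [← hθ, h, map_zero]))
    (fun v => ⟨fun h hw => Units.ne_zero (Φ ⟨v, hw⟩) (by rw [← hφ1 v hw]; exact (hker _).2 h),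
      hιp v⟩)
    (fun r => (hnf0 r).imp id fun ⟨v, y, hy, h⟩ => ⟨v, y, fun h' => hy ((hker y).2 h'), h⟩)
  refine ⟨hv.1, hv.2, ?_⟩
  obtain ⟨e, he⟩ := residue_equiv 𝔭 φ hker (by
    intro S hS x
    apply subfield_top m _ S
    · intro c
      obtain ⟨a, rfl⟩ := IsLocalRing.residue_surjective c
      rw [← hφA]
      exact hS _
    · intro i
      obtain ⟨g, hg⟩ := hΦ2 i
      have hgV : (g : Λ) ∈ V := ((hW _).1 g.2).1
      have := hS (ι ⟨g, hgV⟩)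
      rw [hφ1 ⟨g, hgV⟩ g.2] at this
      rw [← hg]
      exact this)
  exact ⟨e, fun a => by rw [he, hφA]; rfl⟩
end

section
/- Let L/K be a Galois extension whose Galois group is cyclic of order a prime number ℓ, and let B be the integral closure of A in L. Then for every finite subset S of B there exists an element s ∈ B such that S is contained in the A-subalgebra A[s] of B generated by s. -/
open Polynomial
open scoped Pointwise

theorem aux_isLocal {A B G : Type*} [CommRing A] [HenselianLocalRing A] [CommRing B] [IsDomain B]
    [Algebra A B] [Group G] [Finite G] [MulSemiringAction G B] [SMulCommClass G A B]
    [Algebra.IsInvariant A B G] (hp : (Nat.card G).Prime) : IsLocalRing B := by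
  classical
  cases nonempty_fintype G
  have hint : Algebra.IsIntegral A B := Algebra.IsInvariant.isIntegral A B G
  have hund : ∀ (M : Ideal B), M.IsMaximal → M.under A = IsLocalRing.maximalIdeal A := by
    intro M hM
    have : (M.under A).IsMaximal := Ideal.isMaximal_comap_of_isIntegral_of_isMaximal M
    exact IsLocalRing.eq_maximalIdeal this
  by_contra hloc
  obtain ⟨M, hM⟩ := Ideal.exists_maximal B
  have : ∃ N : Ideal B, N.IsMaximal ∧ N ≠ M := by
    by_contra h
    push Not at h
    exact hloc (IsLocalRing.of_unique_max_ideal ⟨M, hM, h⟩)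
  obtain ⟨N, hN, hNM⟩ := this
  obtain ⟨g₀, hg₀⟩ := Algebra.IsInvariant.exists_smul_of_under_eq A B G M N
    ((hund M hM).trans (hund N hN).symm)
  have hstab : MulAction.stabilizer G M = ⊥ := by
    have : Fact (Nat.card G).Prime := ⟨hp⟩
    rcases (MulAction.stabilizer G M).eq_bot_or_eq_top_of_prime_card with h | h
    · exact h
    · exfalso
      have : g₀ ∈ MulAction.stabilizer G M := h ▸ Subgroup.mem_top _
      rw [MulAction.mem_stabilizer_iff] at this
      exact hNM (hg₀.trans this)
  have hmax : ∀ g : G, (g • M).IsMaximal := by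
    intro g
    have := Ideal.map_isMaximal_of_equiv (MulSemiringAction.toRingEquiv G B g) (p := M)
    exact this
  have hne : ∀ g h : G, g ≠ h → IsCoprime (g • M) (h • M) := by
    intro g h hgh
    rw [Ideal.isCoprime_iff_sup_eq]
    refine Ideal.IsMaximal.coprime_of_ne (hmax g) (hmax h) fun e => hgh ?_
    have : h⁻¹ * g ∈ MulAction.stabilizer G M := by
      rw [MulAction.mem_stabilizer_iff, mul_smul, e, inv_smul_smul]
    rw [hstab, Subgroup.mem_bot] at this
    exact (inv_mul_eq_one.mp this).symm
  obtain ⟨b, hb⟩ := Ideal.exists_forall_sub_mem_ideal 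
    (I := fun g : G => g • M) (fun g h hgh => hne g h hgh)
    (fun g => if g = 1 then (1 : B) else 0)
  have hb1 : b - 1 ∈ M := by simpa using hb 1
  have hb0 : ∀ g : G, g ≠ 1 → b ∈ g • M := by
    intro g hg
    simpa [hg] using hb g
  have hb0' : ∀ g : G, g ≠ 1 → g • b ∈ M := by
    intro g hg
    have := hb0 g⁻¹ (by simpa using hg)
    exact Ideal.mem_inv_pointwise_smul_iff.mp this
  obtain ⟨p, hp1, -, hp2⟩ := Polynomial.lifts_and_natDegree_eq_and_monic
    (Algebra.IsInvariant.charpoly_mem_lifts A B G b) (MulSemiringAction.monic_charpoly G b)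
  have hQ : MulSemiringAction.charpoly G b =
      (X - C b) * ∏ g ∈ Finset.univ.erase (1 : G), (X - C (g • b)) := by
    rw [MulSemiringAction.charpoly_eq, ← Finset.mul_prod_erase _ _ (Finset.mem_univ (1 : G)),
      one_smul]
  have hmem : ∀ a : A, algebraMap A B a ∈ M ↔ a ∈ IsLocalRing.maximalIdeal A := by
    intro a
    rw [← hund M hM]; rfl
  have hev : ∀ a : A, algebraMap A B (p.eval a) =
      (MulSemiringAction.charpoly G b).eval (algebraMap A B a) := by
    intro a
    rw [← hp1, eval_map_algebraMap, aeval_algebraMap_apply_eq_algebraMap_eval]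
  have hev' : algebraMap A B (p.derivative.eval 1) =
      (MulSemiringAction.charpoly G b).derivative.eval 1 := by
    rw [← hp1, derivative_map, eval_map_algebraMap, ← map_one (algebraMap A B),
      aeval_algebraMap_apply_eq_algebraMap_eval]
  have hQ1 : ∏ g ∈ Finset.univ.erase (1 : G), (1 - g • b) ∉ M := by
    have hMp := hM.isPrime
    rw [hMp.prod_mem_iff]
    rintro ⟨g, hg, hgM⟩
    have := M.add_mem hgM (hb0' g (Finset.ne_of_mem_erase hg))
    rw [sub_add_cancel] at this
    exact hM.ne_top ((Ideal.eq_top_iff_one _).mpr this)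
  obtain ⟨r, hr, hr1⟩ := HenselianLocalRing.is_henselian p hp2 1 (by
    rw [← hmem, hev, hQ, map_one, eval_mul]
    refine M.mul_mem_right _ ?_
    rw [← M.neg_mem_iff]
    simpa using hb1) (by
    by_contra hu
    rw [← mem_nonunits_iff, ← IsLocalRing.mem_maximalIdeal, ← hmem, hev', hQ, derivative_mul,
      eval_add, eval_mul, eval_mul] at hu
    apply hQ1
    have h2 := (M.add_mem_iff_left (M.mul_mem_right (eval 1 (derivative
      (∏ g ∈ Finset.univ.erase (1 : G), (X - C (g • b))))) (a := eval 1 (X - C b)) (by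
        rw [← M.neg_mem_iff]; simpa using hb1))).mp hu
    simpa [eval_prod] using h2)
  have h0 : ∏ g : G, (algebraMap A B r - g • b) = 0 := by
    have := hev r
    rw [hr.eq_zero, map_zero, MulSemiringAction.charpoly_eq, eval_prod] at this
    simpa using this.symm
  obtain ⟨g, -, hg⟩ := Finset.prod_eq_zero_iff.mp h0
  have hbr : b = algebraMap A B r := by
    have h3 : g • b = g • algebraMap A B r := by
      rw [smul_algebraMap]; exact (sub_eq_zero.mp hg).symm
    exact (smul_left_cancel_iff g).mp h3
  have hnt : Nontrivial G := by
    rw [← Finite.one_lt_card_iff_nontrivial]; exact hp.one_lt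
  obtain ⟨g', hg'⟩ := exists_ne (1 : G)
  have h4 := hb0' g' hg'
  rw [hbr, smul_algebraMap, hmem] at h4
  have h5 := sub_mem h4 hr1
  rw [sub_sub_cancel] at h5
  exact (Ideal.ne_top_iff_one _).mp (IsLocalRing.maximalIdeal.isMaximal A).ne_top h5

theorem aux_uu {B L : Type*} [CommRing B] [IsLocalRing B] [Field L] [Algebra B L]
    (hic : ∀ y : L, IsIntegral B y → ∃ b : B, algebraMap B L b = y) (x : L) (n : ℕ) :
    ∀ P : B[X], P.natDegree ≤ n → aeval x P = 0 → (∃ i, IsUnit (P.coeff i)) →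
      (∃ b : B, algebraMap B L b = x) ∨ (∃ b : B, algebraMap B L b = x⁻¹) := by
  induction n with
  | zero =>
    rintro P hP h0 ⟨i, hi⟩
    exfalso
    rw [Polynomial.eq_C_of_natDegree_le_zero hP] at h0 hi
    rw [aeval_C] at h0
    rw [coeff_C] at hi
    split_ifs at hi with h
    · exact (hi.map (algebraMap B L)).ne_zero h0
    · have := (hi.map (algebraMap B L)).ne_zero
      simp at this
  | succ n ih =>
    rintro P hP h0 ⟨i, hi⟩
    by_cases hPn : P.natDegree ≤ n
    · exact ih P hPn h0 ⟨i, hi⟩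
    have hdeg : P.natDegree = n + 1 := by omega
    obtain ⟨c, hc⟩ := hic _ (isIntegral_leadingCoeff_smul P x h0)
    have ha : P.leadingCoeff = P.coeff (n + 1) := by rw [leadingCoeff, hdeg]
    rw [ha, Algebra.smul_def] at hc
    set a := P.coeff (n + 1) with hadef
    by_cases hcu : IsUnit c
    · right
      obtain ⟨c', hc'⟩ := hcu.exists_left_inv
      refine ⟨c' * a, ?_⟩
      apply eq_inv_of_mul_eq_one_left
      rw [map_mul, mul_assoc, ← hc, ← map_mul, hc', map_one]
    by_cases hau : IsUnit a
    · left
      obtain ⟨a', ha'⟩ := hau.exists_left_inv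
      refine ⟨a' * c, ?_⟩
      rw [map_mul, hc, ← mul_assoc, ← map_mul, ha', map_one, one_mul]
    have hPe : P = P.erase (n + 1) + C a * X ^ (n + 1) := by
      conv_lhs => rw [← P.monomial_add_erase (n + 1)]
      rw [add_comm, C_mul_X_pow_eq_monomial]
    refine ih (P.erase (n + 1) + C c * X ^ n) ?_ ?_ ⟨i, ?_⟩
    · rw [natDegree_le_iff_coeff_eq_zero]
      intro N hN
      rw [coeff_add, coeff_erase, coeff_C_mul, coeff_X_pow, if_neg (by omega : N ≠ n), mul_zero,
        add_zero]
      split_ifs with h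
      · rfl
      · exact coeff_eq_zero_of_natDegree_lt (by omega)
    · have : aeval x P = aeval x (P.erase (n + 1) + C c * X ^ n) := by
        conv_lhs => rw [hPe]
        simp only [map_add, map_mul, aeval_C, map_pow, aeval_X, hc]
        ring
      rw [← this, h0]
    · have hin : i ≠ n + 1 := fun h => hau (by rw [hadef, ← h]; exact hi)
      rw [coeff_add, coeff_erase, coeff_C_mul, coeff_X_pow, if_neg hin]
      split_ifs with h
      · rw [mul_one]
        by_contra hu
        have h1 := (IsLocalRing.maximalIdeal B).sub_mem ((IsLocalRing.mem_maximalIdeal _).mpr hu)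
          ((IsLocalRing.mem_maximalIdeal _).mpr hcu)
        rw [add_sub_cancel_right] at h1
        exact (IsLocalRing.mem_maximalIdeal _).mp h1 hi
      · simpa using hi

theorem aux_normalize {A K : Type*} [CommRing A] [IsDomain A] [ValuationRing A] [Field K]
    [Algebra A K] [IsFractionRing A K] (f : K[X]) (hf : f ≠ 0) :
    ∃ (P : A[X]) (c : K), P.map (algebraMap A K) = C c * f ∧ ∃ i, P.coeff i = 1 := by
  obtain ⟨i, hi, hmax⟩ := Finset.exists_max_image f.support
    (fun i => ValuationRing.valuation A K (f.coeff i)) (by simpa using hf)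
  have hi0 : f.coeff i ≠ 0 := by simpa using hi
  have : C (f.coeff i)⁻¹ * f ∈ Polynomial.lifts (algebraMap A K) := by
    rw [lifts_iff_coeff_lifts]
    intro n
    rw [coeff_C_mul]
    change ∃ a, algebraMap A K a = _
    rw [← ValuationRing.mem_integer_iff, Valuation.mem_integer_iff, map_mul, map_inv₀]
    by_cases hn : f.coeff n = 0
    · simp [hn]
    · have := hmax n (by simpa using hn)
      have hv : 0 < ValuationRing.valuation A K (f.coeff i) := by
        rw [zero_lt_iff]; simpa using hi0
      rw [inv_mul_le_iff₀ hv, mul_one]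
      exact this
  obtain ⟨P, hP⟩ := (mem_lifts _).mp this
  refine ⟨P, _, hP, i, ?_⟩
  apply IsFractionRing.injective A K
  rw [← coeff_map, hP, coeff_C_mul, inv_mul_cancel₀ hi0, map_one]

theorem aux_hensel1 {A : Type*} [CommRing A] [HenselianLocalRing A] (m : ℕ) (hm : 1 ≤ m)
    (n : ℕ → A) (hn : ∀ i, n i ∈ IsLocalRing.maximalIdeal A) :
    ∃ t : A, IsUnit t ∧
      t ^ m - t ^ (m - 1) + ∑ i ∈ Finset.Icc 2 m, n i * t ^ (m - i) = 0 := by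
  let q : A[X] := - X ^ (m - 1) + ∑ i ∈ Finset.Icc 2 m, C (n i) * X ^ (m - i)
  have hq : q.degree < m := by
    refine (degree_add_le _ _).trans_lt (max_lt ?_ ?_)
    · rw [degree_neg]
      exact (degree_X_pow_le _).trans_lt (by exact_mod_cast (by omega : m - 1 < m))
    · refine (degree_sum_le _ _).trans_lt ?_
      rw [Finset.sup_lt_iff (by exact_mod_cast WithBot.bot_lt_coe m)]
      intro i hi
      rw [Finset.mem_Icc] at hi
      exact (degree_C_mul_X_pow_le _ _).trans_lt (by exact_mod_cast (by omega : m - i < m))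
  have hmon : (X ^ m + q).Monic := monic_X_pow_add hq
  have hsum : ∀ k : ℕ → A, ∑ i ∈ Finset.Icc 2 m, n i * k i ∈ IsLocalRing.maximalIdeal A :=
    fun k => Ideal.sum_mem _ fun i _ => Ideal.mul_mem_right _ _ (hn i)
  have hev : ∀ t : A, (X ^ m + q).eval t =
      t ^ m - t ^ (m - 1) + ∑ i ∈ Finset.Icc 2 m, n i * t ^ (m - i) := by
    intro t
    simp only [q, eval_add, eval_pow, eval_X, eval_neg, eval_finsetSum, eval_mul, eval_C]
    ring
  obtain ⟨t, ht, ht1⟩ := HenselianLocalRing.is_henselian (X ^ m + q) hmon 1 (by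
    rw [hev]
    simpa using hsum fun _ => 1) (by
    have : (X ^ m + q).derivative.eval 1 = 1 + ∑ i ∈ Finset.Icc 2 m, n i * ((m - i : ℕ) : A) := by
      simp only [q, derivative_add, derivative_X_pow, derivative_neg, eval_add, eval_neg,
        derivative_sum, eval_finsetSum, derivative_C_mul, eval_mul, eval_C, eval_pow, eval_X,
        one_pow, mul_one]
      obtain ⟨k, rfl⟩ : ∃ k, m = k + 1 := ⟨m - 1, by omega⟩
      rw [Nat.add_sub_cancel, Nat.cast_succ]
      ring
    rw [this]
    by_contra hu
    have h1 := Ideal.sub_mem _ ((IsLocalRing.mem_maximalIdeal _).mpr hu)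
      (hsum fun i => ((m - i : ℕ) : A))
    rw [add_sub_cancel_right] at h1
    exact (IsLocalRing.mem_maximalIdeal _).mp h1 isUnit_one)
  refine ⟨t, ?_, by rw [← hev]; exact ht⟩
  by_contra hu
  have h1 := Ideal.sub_mem _ ((IsLocalRing.mem_maximalIdeal _).mpr hu) ht1
  rw [sub_sub_cancel] at h1
  exact (IsLocalRing.mem_maximalIdeal _).mp h1 isUnit_one

theorem aux_hensel2 {A K Γ : Type*} [CommRing A] [HenselianLocalRing A] [Field K] [Algebra A K]
    [LinearOrderedCommGroupWithZero Γ] (w : Valuation K Γ)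
    (hw : ∀ a : K, w a < 1 → ∃ a' ∈ IsLocalRing.maximalIdeal A, algebraMap A K a' = a)
    (T : K[X]) (hT : 1 ≤ T.natDegree) (γ : Γ) (h1 : T.coeff 1 ≠ 0)
    (h0 : w (T.coeff 0) ≤ w (T.coeff 1) * γ)
    (h2 : ∀ i, 2 ≤ i → w (T.coeff i) * γ ^ i < w (T.coeff 1) * γ) :
    ∃ r, T.eval r = 0 := by
  set t := T.coeff with ht
  set m := T.natDegree with hm
  have hw1 : w (t 1) ≠ 0 := by simpa using h1
  have hlt : ∀ i, 2 ≤ i → w ((-1) ^ i * t i * t 0 ^ (i - 1) / t 1 ^ i) < 1 := by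
    intro i hi
    obtain ⟨j, rfl⟩ : ∃ j, i = j + 1 := ⟨i - 1, by omega⟩
    rw [map_div₀, map_mul, map_mul, map_pow, map_pow, map_pow, Valuation.map_neg, map_one, one_pow,
      one_mul, div_lt_one₀ (pow_pos (zero_lt_iff.mpr hw1) _), Nat.add_sub_cancel]
    calc w (t (j+1)) * w (t 0) ^ j ≤ w (t (j+1)) * (w (t 1) * γ) ^ j := by gcongr
      _ = (w (t (j+1)) * γ ^ j) * w (t 1) ^ j := by rw [mul_pow]; ac_rfl
      _ < w (t 1) * w (t 1) ^ j := by
        have := h2 (j+1) hi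
        rw [pow_succ, ← mul_assoc] at this
        have h3 := lt_of_mul_lt_mul_right' this
        exact mul_lt_mul_of_pos_right h3 (pow_pos (zero_lt_iff.mpr hw1) _)
      _ = _ := by rw [pow_succ']
  have hex : ∀ i, ∃ a ∈ IsLocalRing.maximalIdeal A,
      2 ≤ i → algebraMap A K a = (-1) ^ i * t i * t 0 ^ (i - 1) / t 1 ^ i := by
    intro i
    by_cases hi : 2 ≤ i
    · obtain ⟨a, ha, ha'⟩ := hw _ (hlt i hi)
      exact ⟨a, ha, fun _ => ha'⟩
    · exact ⟨0, zero_mem _, fun h => absurd h hi⟩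
  choose n hn hn' using hex
  obtain ⟨τ, hτu, hτ⟩ := aux_hensel1 m hT n hn
  set s := algebraMap A K τ with hs
  have hs0 : s ≠ 0 := (hτu.map (algebraMap A K)).ne_zero
  have hsE : s ^ m - s ^ (m - 1) + ∑ i ∈ Finset.Icc 2 m,
      ((-1) ^ i * t i * t 0 ^ (i - 1) / t 1 ^ i) * s ^ (m - i) = 0 := by
    have := congrArg (algebraMap A K) hτ
    rw [map_zero, map_add, map_sub, map_pow, map_pow, map_sum] at this
    rw [← this]
    congr 1
    refine Finset.sum_congr rfl fun i hi => ?_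
    rw [map_mul, map_pow, hn' i (Finset.mem_Icc.mp hi).1]
  refine ⟨-t 0 / (t 1 * s), ?_⟩
  have key : s ^ m * T.eval (-t 0 / (t 1 * s)) = t 0 * (s ^ m - s ^ (m - 1) +
      ∑ i ∈ Finset.Icc 2 m, ((-1) ^ i * t i * t 0 ^ (i - 1) / t 1 ^ i) * s ^ (m - i)) := by
    rw [eval_eq_sum_range, ← hm]
    have hr : Finset.range (m + 1) = insert 0 (insert 1 (Finset.Icc 2 m)) := by
      ext i; simp; omega
    rw [hr, Finset.sum_insert (by simp), Finset.sum_insert (by simp), mul_add, mul_add, mul_add,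
      Finset.mul_sum, Finset.mul_sum, ← add_assoc]
    congr 1
    · rw [← ht]
      obtain ⟨k, hk⟩ : ∃ k, m = k + 1 := ⟨m - 1, by omega⟩
      rw [hk, Nat.add_sub_cancel]
      field_simp
      ring
    · refine Finset.sum_congr rfl fun i hi => ?_
      rw [Finset.mem_Icc] at hi
      obtain ⟨j, rfl⟩ : ∃ j, i = j + 1 := ⟨i - 1, by omega⟩
      obtain ⟨k, hk⟩ : ∃ k, m = k + (j + 1) := ⟨m - (j + 1), by omega⟩
      rw [← ht, hk, Nat.add_sub_cancel, Nat.add_sub_cancel, div_pow, mul_pow, neg_pow, pow_add]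
      field_simp
      ring
  rw [hsE, mul_zero] at key
  exact (mul_eq_zero.mp key).resolve_left (pow_ne_zero _ hs0)

/-- terms of the Taylor expansion of `f` at `a`, evaluated at `x` -/
noncomputable def auxU {K L : Type*} [Field K] [Field L] [Algebra K L] (x : L) (a : K) (f : K[X])
    (i : ℕ) : L :=
  algebraMap K L ((taylor a f).coeff i) * (x - algebraMap K L a) ^ i

theorem auxU_zero {K L : Type*} [Field K] [Field L] [Algebra K L] (x : L) (a : K) (f : K[X]) :
    auxU x a f 0 = algebraMap K L (f.eval a) := by
  simp [auxU]

theorem auxU_mul {K L : Type*} [Field K] [Field L] [Algebra K L] (x : L) (a : K) (f g : K[X])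
    (i : ℕ) : auxU x a (f * g) i =
      ∑ p ∈ Finset.HasAntidiagonal.antidiagonal i, auxU x a f p.1 * auxU x a g p.2 := by
  rw [auxU, taylor_mul, coeff_mul, map_sum, Finset.sum_mul]
  refine Finset.sum_congr rfl fun p hp => ?_
  rw [← Finset.HasAntidiagonal.mem_antidiagonal.mp hp, auxU, auxU, map_mul, pow_add]
  ring

theorem auxU_sum {K L : Type*} [Field K] [Field L] [Algebra K L] (x : L) (a : K) (f : K[X])
    (n : ℕ) (hn : f.natDegree < n) : aeval x f = ∑ i ∈ Finset.range n, auxU x a f i := by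
  have h : f = (taylor a f).comp (X - C a) := by
    rw [taylor_apply, comp_assoc]; simp
  conv_lhs => rw [h]
  rw [aeval_comp, aeval_eq_sum_range' (n := n) (by rwa [natDegree_taylor])]
  refine Finset.sum_congr rfl fun i _ => ?_
  simp [auxU, Algebra.smul_def]

theorem aux_stable_mul {K L Γ : Type*} [Field K] [Field L] [Algebra K L]
    [LinearOrderedCommGroupWithZero Γ] (v : Valuation L Γ) (x : L) (a : K) (f g : K[X])
    (hf : ∀ i, 1 ≤ i → v (auxU x a f i) < v (auxU x a f 0))
    (hg : ∀ i, 1 ≤ i → v (auxU x a g i) < v (auxU x a g 0)) :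
    ∀ i, 1 ≤ i → v (auxU x a (f * g) i) < v (auxU x a (f * g) 0) := by
  have hf0 : 0 < v (auxU x a f 0) := zero_le.trans_lt (hf 1 le_rfl)
  have hg0 : 0 < v (auxU x a g 0) := zero_le.trans_lt (hg 1 le_rfl)
  have hgle : ∀ i, v (auxU x a g i) ≤ v (auxU x a g 0) := by
    intro i
    rcases Nat.eq_zero_or_pos i with rfl | h
    · exact le_rfl
    · exact (hg i h).le
  intro i hi
  rw [auxU_mul x a f g 0]
  simp only [Finset.Nat.antidiagonal_zero, Finset.sum_singleton, map_mul]
  rw [auxU_mul]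
  refine Valuation.map_sum_lt v (mul_pos hf0 hg0).ne' fun p hp => ?_
  rw [map_mul]
  have hp' := Finset.HasAntidiagonal.mem_antidiagonal.mp hp
  rcases Nat.eq_zero_or_pos p.1 with h | h
  · rw [h]
    exact mul_lt_mul_of_pos_left (hg _ (by omega)) hf0
  · calc _ ≤ v (auxU x a f p.1) * v (auxU x a g 0) := by gcongr; exact hgle _
      _ < _ := mul_lt_mul_of_pos_right (hf _ h) hg0

theorem aux_stable {A K L Γ : Type*} [CommRing A] [HenselianLocalRing A] [Field K] [Algebra A K]
    [Field L] [Algebra K L] [LinearOrderedCommGroupWithZero Γ] (v : Valuation L Γ)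
    (hw : ∀ a : K, v (algebraMap K L a) < 1 →
      ∃ a' ∈ IsLocalRing.maximalIdeal A, algebraMap A K a' = a)
    (x : L) (hx : ∀ a : K, ∃ b : K, v (x - algebraMap K L b) < v (x - algebraMap K L a))
    (ℓ : ℕ) (hu : ∀ m : ℕ, 0 < m → m < ℓ → v (m : L) = 1) (n : ℕ) :
    ∀ f : K[X], f ≠ 0 → f.natDegree ≤ n → f.natDegree < ℓ →
      ∃ a₀ : K, ∀ a : K, v (x - algebraMap K L a) ≤ v (x - algebraMap K L a₀) →
        ∀ i, 1 ≤ i → v (auxU x a f i) < v (auxU x a f 0) := by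
  have hpos : ∀ a : K, 0 < v (x - algebraMap K L a) := by
    intro a
    obtain ⟨b, hb⟩ := hx a
    exact zero_le.trans_lt hb
  have hconst : ∀ f : K[X], f ≠ 0 → f.natDegree = 0 → ∀ (a : K) (i : ℕ), 1 ≤ i →
      v (auxU x a f i) < v (auxU x a f 0) := by
    intro f hf hd a i hi
    have h1 : auxU x a f i = 0 := by
      rw [auxU, coeff_eq_zero_of_natDegree_lt (by rw [natDegree_taylor]; omega), map_zero, zero_mul]
    rw [h1, map_zero, zero_lt_iff, Valuation.ne_zero_iff, auxU_zero]
    rw [eq_C_of_natDegree_eq_zero hd] at hf ⊢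
    simpa using hf
  have hlin : ∀ r : K, ∃ a₀ : K, ∀ a : K, v (x - algebraMap K L a) ≤ v (x - algebraMap K L a₀) →
        ∀ i, 1 ≤ i → v (auxU x a (X - C r) i) < v (auxU x a (X - C r) 0) := by
    intro r
    obtain ⟨b, hb⟩ := hx r
    refine ⟨b, fun a ha i hi => ?_⟩
    have hlt := ha.trans_lt hb
    have h0 : v (auxU x a (X - C r) 0) = v (x - algebraMap K L r) := by
      rw [auxU_zero]
      have : algebraMap K L ((X - C r).eval a) =
        (x - algebraMap K L r) - (x - algebraMap K L a) := by simp
      rw [this]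
      exact Valuation.map_sub_eq_of_lt_left v hlt
    rw [h0]
    rcases Nat.lt_or_ge 1 i with h | h
    · have h1 : auxU x a (X - C r) i = 0 := by
        rw [auxU, coeff_eq_zero_of_natDegree_lt (by rw [natDegree_taylor, natDegree_X_sub_C]; omega),
          map_zero, zero_mul]
      rw [h1, map_zero]
      exact hpos r
    · obtain rfl : i = 1 := by omega
      have h1 : auxU x a (X - C r) 1 = x - algebraMap K L a := by
        simp [auxU, taylor_coeff_one]
      rw [h1]
      exact hlt
  induction n with
  | zero =>
    intro f hf hd _
    exact ⟨0, fun a _ => hconst f hf (by omega) a⟩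
  | succ n ih =>
    intro f hf hd hdl
    by_cases hd0 : f.natDegree = 0
    · exact ⟨0, fun a _ => hconst f hf hd0 a⟩
    by_cases hroot : ∃ r, f.eval r = 0
    · obtain ⟨r, hr⟩ := hroot
      obtain ⟨g, rfl⟩ := dvd_iff_isRoot.mpr hr
      have hg : g ≠ 0 := right_ne_zero_of_mul hf
      have hdeg : ((X - C r) * g).natDegree = 1 + g.natDegree := by
        rw [natDegree_mul (X_sub_C_ne_zero r) hg, natDegree_X_sub_C]
      obtain ⟨a₁, h₁⟩ := hlin r
      obtain ⟨a₂, h₂⟩ := ih g hg (by omega) (by omega)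
      rcases le_total (v (x - algebraMap K L a₁)) (v (x - algebraMap K L a₂)) with h | h
      · exact ⟨a₁, fun a ha => aux_stable_mul v x a _ _ (h₁ a ha) (h₂ a (ha.trans h))⟩
      · exact ⟨a₂, fun a ha => aux_stable_mul v x a _ _ (h₁ a (ha.trans h)) (h₂ a ha)⟩
    have hder : f.derivative ≠ 0 := by
      intro h
      have h1 := congrArg (fun p => p.coeff (f.natDegree - 1)) h
      simp only [coeff_derivative, coeff_zero] at h1
      rw [Nat.sub_add_cancel (by omega), coeff_natDegree] at h1
      have h2 : ((f.natDegree - 1 : ℕ) : K) + 1 = (f.natDegree : K) := by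
        rw [← Nat.cast_succ, Nat.succ_eq_add_one, Nat.sub_add_cancel (by omega)]
      rw [h2] at h1
      have h3 := (mul_eq_zero.mp h1).resolve_left (by simpa using hf)
      have h4 := hu f.natDegree (by omega) hdl
      have h5 : (f.natDegree : L) = 0 := by
        rw [← map_natCast (algebraMap K L), h3, map_zero]
      rw [h5, map_zero] at h4
      exact zero_ne_one h4
    have hdd := natDegree_derivative_lt hd0
    obtain ⟨a₀, h₀⟩ := ih f.derivative hder (by omega) (by omega)
    refine ⟨a₀, fun a ha => ?_⟩
    have hQ := h₀ a ha
    have hUd : ∀ i, auxU x a f.derivative i * (x - algebraMap K L a) =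
        ((i + 1 : ℕ) : L) * auxU x a f (i + 1) := by
      intro i
      have : (taylor a f.derivative).coeff i = (taylor a f).coeff (i + 1) * ((i + 1 : ℕ) : K) := by
        have hd : taylor a f.derivative = derivative (taylor a f) := by
          simp [taylor_apply, derivative_comp]
        rw [hd, coeff_derivative]; push_cast; rfl
      rw [auxU, auxU, this, map_mul, map_natCast, pow_succ]
      ring
    have h1' : v (auxU x a f 1) = v (auxU x a f.derivative 0) * v (x - algebraMap K L a) := by
      rw [← map_mul, hUd 0]; simp
    have h2 : ∀ i, 2 ≤ i → v (auxU x a f i) < v (auxU x a f 1) := by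
      intro i hi
      obtain ⟨j, rfl⟩ : ∃ j, i = j + 1 := ⟨i - 1, by omega⟩
      have hlt : v (auxU x a f.derivative j * (x - algebraMap K L a)) < v (auxU x a f 1) := by
        rw [h1', map_mul]
        exact mul_lt_mul_of_pos_right (hQ j (by omega)) (hpos a)
      by_cases hj : j + 1 < ℓ
      · rwa [hUd, map_mul, hu _ (by omega) hj, one_mul] at hlt
      · have : auxU x a f (j + 1) = 0 := by
          rw [auxU, coeff_eq_zero_of_natDegree_lt (by rw [natDegree_taylor]; omega), map_zero,
            zero_mul]
        rw [this, map_zero]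
        exact zero_le.trans_lt hlt
    have h1ne : 0 < v (auxU x a f 1) := zero_le.trans_lt (h2 2 le_rfl)
    have h10 : v (auxU x a f 1) < v (auxU x a f 0) := by
      by_contra hcon
      rw [not_lt] at hcon
      obtain ⟨r, hr⟩ := aux_hensel2 (A := A) (v.comap (algebraMap K L)) hw (taylor a f)
        (by rw [natDegree_taylor]; omega) (v (x - algebraMap K L a))
        (by
          intro h
          rw [auxU, h] at h1ne
          simp at h1ne)
        (by simpa [auxU] using hcon)
        (by
          intro i hi
          have := h2 i hi
          simpa [auxU] using this)
      rw [taylor_eval] at hr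
      exact hroot ⟨_, hr⟩
    intro i hi
    rcases Nat.lt_or_ge 1 i with h | h
    · exact (h2 i h).trans h10
    · obtain rfl : i = 1 := by omega
      exact h10

theorem aux_pow_notMem {Γ : Type*} [CommGroup Γ] (H : Subgroup Γ) (ℓ : ℕ) (hℓ : ℓ.Prime)
    (hpow : ∀ γ : Γ, γ ^ ℓ ∈ H) (g : Γ) (hg : g ∉ H) (i : ℕ) (hi : 1 ≤ i) (hi' : i < ℓ) :
    g ^ i ∉ H := by
  intro h
  apply hg
  have hc : Nat.Coprime i ℓ :=
    ((Nat.Prime.coprime_iff_not_dvd hℓ).mpr fun h => by have := Nat.le_of_dvd (by omega) h; omega).symm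
  have hb := Nat.gcd_eq_gcd_ab i ℓ
  rw [hc] at hb
  have : g = (g ^ i) ^ (Nat.gcdA i ℓ) * (g ^ ℓ) ^ (Nat.gcdB i ℓ) := by
    rw [← zpow_natCast, ← zpow_natCast, ← zpow_mul, ← zpow_mul, ← zpow_add, ← hb]
    simp
  rw [this]
  exact H.mul_mem (H.zpow_mem h _) (H.zpow_mem (hpow g) _)

theorem aux_group {Γ : Type*} [CommGroup Γ] [LinearOrder Γ] [IsOrderedMonoid Γ]
    (H : Subgroup Γ) (ℓ : ℕ) (hℓ : ℓ.Prime) (hpow : ∀ γ : Γ, γ ^ ℓ ∈ H)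
    (hcyc : ∀ g, g ∉ H → ∀ γ : Γ, ∃ i, i < ℓ ∧ γ / g ^ i ∈ H) (g₀ : Γ) (hg₀ : g₀ ∉ H) :
    ∃ g, g ∉ H ∧ ∀ D : Finset Γ, (∀ δ ∈ D, δ ≤ 1) → ∃ σ, σ < 1 ∧ σ / g ∈ H ∧
      ∀ δ ∈ D, ∀ i, 1 ≤ i → i < ℓ → δ / g ^ i ∈ H → δ ≤ σ ^ i := by
  classical
  have hnot := aux_pow_notMem H ℓ hℓ hpow
  have hnd : ∀ g, g ∉ H → ∀ δ, ∀ i, 1 ≤ i → i < ℓ → δ / g ^ i ∈ H → δ ∉ H := by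
    intro g hg δ i hi hi' h hδ
    apply hnot g hg i hi hi'
    have := H.div_mem hδ h
    simpa using this
  have hPex : ∃ g, g ∉ H ∧ g < 1 := by
    rcases lt_trichotomy g₀ 1 with h | h | h
    · exact ⟨g₀, hg₀, h⟩
    · exact absurd (h ▸ H.one_mem) hg₀
    · exact ⟨g₀⁻¹, by simpa using hg₀, by simpa using h⟩
  by_cases hA : ∀ δ, δ ∉ H → δ < 1 → ∃ σ, σ ∉ H ∧ σ < 1 ∧ δ ≤ σ ^ 2
  · obtain ⟨g, hg, hg1⟩ := hPex
    refine ⟨g, hg, fun D hD => ?_⟩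
    have hA' : ∀ n : ℕ, ∀ δ, δ ∉ H → δ < 1 → ∃ σ, σ ∉ H ∧ σ < 1 ∧ δ ≤ σ ^ (2 ^ n) := by
      intro n
      induction n with
      | zero => intro δ h1 h2; exact ⟨δ, h1, h2, by simp⟩
      | succ n ih =>
        intro δ h1 h2
        obtain ⟨σ, h3, h4, h5⟩ := ih δ h1 h2
        obtain ⟨τ, h6, h7, h8⟩ := hA σ h3 h4
        refine ⟨τ, h6, h7, h5.trans ?_⟩
        rw [pow_succ', pow_mul]
        exact pow_le_pow_left' h8 _
    let F := insert g (D.filter (fun δ => δ ∉ H))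
    have hFne : F.Nonempty := ⟨g, Finset.mem_insert_self _ _⟩
    have hF : ∀ δ ∈ F, δ ∉ H ∧ δ < 1 := by
      intro δ hδ
      rcases Finset.mem_insert.mp hδ with rfl | h
      · exact ⟨hg, hg1⟩
      · obtain ⟨h1, h2⟩ := Finset.mem_filter.mp h
        exact ⟨h2, lt_of_le_of_ne (hD δ h1) fun h => h2 (h ▸ H.one_mem)⟩
    obtain ⟨hm1, hm2⟩ := hF _ (F.max'_mem hFne)
    obtain ⟨σ, h3, h4, h5⟩ := hA' (ℓ * ℓ) _ hm1 hm2
    obtain ⟨k, hk, hkH⟩ := hcyc σ h3 g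
    have hk0 : k ≠ 0 := by
      rintro rfl
      exact hg (by simpa using hkH)
    refine ⟨σ ^ k, pow_lt_one' h4 hk0, ?_, ?_⟩
    · rw [← H.inv_mem_iff, inv_div]; exact hkH
    · intro δ hδ i hi hi' hδi
      have hδF : δ ∈ F := Finset.mem_insert_of_mem (Finset.mem_filter.mpr
        ⟨hδ, hnd g hg δ i hi hi' hδi⟩)
      refine (F.le_max' δ hδF).trans (h5.trans ?_)
      rw [← pow_mul]
      refine pow_le_pow_right_of_le_one' h4.le ?_
      exact (Nat.mul_le_mul hk.le hi'.le).trans (Nat.lt_two_pow_self).le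
  · push Not at hA
    obtain ⟨g, hg, hg1, hB⟩ := hA
    refine ⟨g, hg, fun D hD => ?_⟩
    have key : ∀ δ ∈ D, ∀ i, 1 ≤ i → i < ℓ → δ / g ^ i ∈ H → ∀ j, j < i → δ / g ^ j < 1 := by
      intro δ hδ i hi hi' hδi j
      have hnH : ∀ j, j < i → δ / g ^ j ∉ H := by
        intro j hj h
        apply hnot g hg (i - j) (by omega) (by omega)
        have := H.div_mem h hδi
        rwa [div_div_div_cancel_left, div_eq_mul_inv, ← pow_sub g hj.le] at this
      induction j with
      | zero =>
        intro _
        have h1 := hnd g hg δ i hi hi' hδi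
        simpa using lt_of_le_of_ne (hD δ hδ) fun h => h1 (h ▸ H.one_mem)
      | succ j ih =>
        intro hj
        have h1 := ih (by omega)
        by_contra hcon
        rw [not_lt, pow_succ, ← div_div, one_le_div'] at hcon
        set ρ := δ / g ^ j with hρ
        have hρH : ρ ∉ H := hnH j (by omega)
        have h2 : ρ / g ∉ H := by
          have := hnH (j + 1) hj
          rwa [pow_succ, ← div_div] at this
        have h3 : g / ρ ∉ H := by rwa [← H.inv_mem_iff, inv_div]
        have h4 : g / ρ < 1 := by
          rw [div_lt_one']
          exact lt_of_le_of_ne hcon fun h => h2 (by rw [← h]; simp)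
        have h5 := hB _ hρH h1
        have h6 := hB _ h3 h4
        rcases le_total ρ (g / ρ) with h | h
        · have : g ≤ (g / ρ) ^ 2 := by
            calc g = g / ρ * ρ := by simp
              _ ≤ g / ρ * (g / ρ) := by gcongr
              _ = _ := by rw [sq]
          exact absurd h6 (not_lt.mpr this)
        · have : g ≤ ρ ^ 2 := by
            calc g = g / ρ * ρ := by simp
              _ ≤ ρ * ρ := by gcongr
              _ = _ := by rw [sq]
          exact absurd h5 (not_lt.mpr this)
    let F := insert g (((D ×ˢ Finset.range ℓ).filter
      (fun p => 1 ≤ p.2 ∧ p.1 / g ^ p.2 ∈ H)).image (fun p => p.1 / g ^ (p.2 - 1)))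
    have hFne : F.Nonempty := ⟨g, Finset.mem_insert_self _ _⟩
    have hF : ∀ σ ∈ F, σ < 1 ∧ σ / g ∈ H := by
      intro σ hσ
      rcases Finset.mem_insert.mp hσ with rfl | h
      · exact ⟨hg1, by simp⟩
      · obtain ⟨⟨δ, i⟩, hp, rfl⟩ := Finset.mem_image.mp h
        simp only [Finset.mem_filter, Finset.mem_product, Finset.mem_range] at hp ⊢
        obtain ⟨⟨hδ, hi'⟩, hi, hδi⟩ := hp
        refine ⟨key δ hδ i hi hi' hδi (i - 1) (by omega), ?_⟩
        rwa [div_div, ← pow_succ, Nat.sub_add_cancel hi]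
    obtain ⟨h1, h2⟩ := hF _ (F.max'_mem hFne)
    refine ⟨F.max' hFne, h1, h2, fun δ hδ i hi hi' hδi => ?_⟩
    have h3 : δ / g ^ (i - 1) ≤ F.max' hFne := by
      apply F.le_max'
      refine Finset.mem_insert_of_mem (Finset.mem_image.mpr ⟨(δ, i), ?_, rfl⟩)
      simp only [Finset.mem_filter, Finset.mem_product, Finset.mem_range]
      exact ⟨⟨hδ, hi'⟩, hi, hδi⟩
    have h4 : g ≤ F.max' hFne := F.le_max' _ (Finset.mem_insert_self _ _)
    calc δ = g ^ (i - 1) * (δ / g ^ (i - 1)) := by simp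
      _ ≤ (F.max' hFne) ^ (i - 1) * F.max' hFne := by gcongr
      _ = _ := by rw [← pow_succ, Nat.sub_add_cancel hi]

theorem aux_setup
    {A K L : Type*} [CommRing A] [IsDomain A] [ValuationRing A] [HenselianLocalRing A]
    [Field K] [Algebra A K] [IsFractionRing A K]
    [Field L] [Algebra K L] [Algebra A L] [IsScalarTower A K L]
    [IsGalois K L] [FiniteDimensional K L]
    (hp : (Nat.card (L ≃ₐ[K] L)).Prime) :
    ∃ V : ValuationSubring L, ∀ z, z ∈ V ↔ z ∈ integralClosure A L := by
  have := integralClosure.isFractionRing_of_finite_extension (A := A) K L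
  let _ := IsIntegralClosure.MulSemiringAction A K L (integralClosure A L)
  have hinv : Algebra.IsInvariant A (integralClosure A L) (L ≃ₐ[K] L) :=
    Algebra.isInvariant_of_isGalois A K L (integralClosure A L)
  have hcomm : SMulCommClass (L ≃ₐ[K] L) A (integralClosure A L) :=
    ⟨fun g a b => map_smul (galRestrict A K L (integralClosure A L) g) a b⟩
  have hloc : IsLocalRing (integralClosure A L) :=
    aux_isLocal (A := A) (G := L ≃ₐ[K] L) hp
  have hic : ∀ y : L, IsIntegral (integralClosure A L) y →
      ∃ b : integralClosure A L, algebraMap _ L b = y := by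
    intro y hy
    exact ⟨⟨y, isIntegral_trans y hy⟩, rfl⟩
  refine ⟨ValuationSubring.ofSubring (integralClosure A L).toSubring ?_, fun z => Iff.rfl⟩
  intro x
  obtain ⟨P, c, hP, i, hi⟩ := aux_normalize (A := A) (minpoly K x)
    (minpoly.ne_zero (Algebra.IsIntegral.isIntegral x))
  have h0 : aeval x P = 0 := by
    rw [← aeval_map_algebraMap K, hP, map_mul, minpoly.aeval, mul_zero]
  have := aux_uu hic x _ (P.map (algebraMap A (integralClosure A L))) le_rfl
    (by rw [aeval_map_algebraMap, h0]) ⟨i, by rw [coeff_map, hi, map_one]; exact isUnit_one⟩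
  rcases this with ⟨b, rfl⟩ | ⟨b, hb⟩
  · exact Or.inl b.2
  · exact Or.inr (hb ▸ b.2)

theorem aux_d1 {A K L : Type*} [CommRing A] [IsDomain A] [ValuationRing A]
    [Field K] [Algebra A K] [IsFractionRing A K]
    [Field L] [Algebra K L] [Algebra A L] [IsScalarTower A K L]
    (a : K) (ha : algebraMap K L a ∈ integralClosure A L) : ∃ a' : A, algebraMap A K a' = a := by
  have h : IsIntegral A (algebraMap K L a) := ha
  rw [isIntegral_algebraMap_iff (algebraMap K L).injective] at h
  exact IsIntegrallyClosed.isIntegral_iff.mp h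

theorem aux_d2 {A K L : Type*} [CommRing A]
    [Field K] [Algebra A K]
    [Field L] [Algebra K L] [Algebra A L] [IsScalarTower A K L] [FiniteDimensional K L]
    (V : ValuationSubring L) (hV : ∀ z, z ∈ V ↔ z ∈ integralClosure A L)
    (σ : L ≃ₐ[K] L) (x : L) : V.valuation (σ x) = V.valuation x := by
  have hint : ∀ (τ : L ≃ₐ[K] L) (z : L), V.valuation z ≤ 1 → V.valuation (τ z) ≤ 1 := by
    intro τ z hz
    rw [V.valuation_le_one_iff, hV] at hz ⊢
    exact hz.map (τ.toAlgHom.restrictScalars A)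
  have hlt : ∀ (τ : L ≃ₐ[K] L) (z : L), V.valuation z < 1 → V.valuation (τ z) < 1 := by
    intro τ z hz
    refine lt_of_le_of_ne (hint τ z hz.le) fun h => ?_
    have h1 : V.valuation (τ z⁻¹) ≤ 1 := by rw [map_inv₀, map_inv₀, h, inv_one]
    have h2 := hint τ.symm _ h1
    rw [AlgEquiv.symm_apply_apply, map_inv₀] at h2
    by_cases hz0 : z = 0
    · rw [hz0] at h; simp at h
    have hvz : 0 < V.valuation z := zero_lt_iff.mpr (by simpa using hz0)
    rw [inv_le_one₀ hvz] at h2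
    exact absurd hz (not_lt.mpr h2)
  have main : ∀ (τ : L ≃ₐ[K] L) (z : L), V.valuation z ≤ V.valuation (τ z) := by
    intro τ z
    by_contra hcon
    rw [not_le] at hcon
    have hiter : ∀ n : ℕ, V.valuation ((τ ^ (n + 1)) z) < V.valuation z := by
      intro n
      induction n with
      | zero => simpa using hcon
      | succ n ih =>
        have hz0 : z ≠ 0 := by
          rintro rfl
          simp at hcon
        have hz : 0 < V.valuation z := zero_lt_iff.mpr (by simpa using hz0)
        have hτz : 0 < V.valuation (τ z) := zero_lt_iff.mpr (by simpa using hz0)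
        have h1 : V.valuation ((τ ^ (n + 1)) z / z) < 1 := by
          rw [map_div₀, div_lt_one₀ hz]; exact ih
        have h2 := hlt τ _ h1
        rw [map_div₀, map_div₀, div_lt_one₀ hτz, ← AlgEquiv.mul_apply, ← pow_succ'] at h2
        exact h2.trans hcon
    have hfin : IsOfFinOrder τ := isOfFinOrder_of_finite τ
    have h3 := hiter (orderOf τ - 1)
    rw [Nat.sub_add_cancel hfin.orderOf_pos, pow_orderOf_eq_one] at h3
    exact lt_irrefl _ h3
  refine le_antisymm ?_ (main σ x)
  have := main σ.symm (σ x)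
  rwa [AlgEquiv.symm_apply_apply] at this

theorem aux_d4 {K L : Type*} [Field K] [Field L] [Algebra K L] [FiniteDimensional K L]
    (ℓ : ℕ) (hℓ : ℓ.Prime) (hd : Module.finrank K L = ℓ) (x : L)
    (hx : ∀ a : K, algebraMap K L a ≠ x) (z : L) :
    ∃ f : K[X], f.natDegree < ℓ ∧ aeval x f = z := by
  have hxi : IsIntegral K x := Algebra.IsIntegral.isIntegral x
  have hdeg : (minpoly K x).natDegree = ℓ := by
    have h1 := minpoly.degree_dvd hxi
    rw [hd] at h1
    rcases (Nat.dvd_prime hℓ).mp h1 with h | h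
    · rw [minpoly.natDegree_eq_one_iff] at h
      obtain ⟨a, ha⟩ := h
      exact absurd ha (hx a)
    · exact h
  have htop : IntermediateField.adjoin K {x} = ⊤ := by
    rw [← IntermediateField.finrank_eq_one_iff_eq_top] 
    have h1 := IntermediateField.adjoin.finrank hxi
    have h2 := Module.finrank_mul_finrank K (IntermediateField.adjoin K {x}) L
    rw [h1, hdeg, hd] at h2
    exact Nat.eq_of_mul_eq_mul_left hℓ.pos (by rw [h2, mul_one])
  have hz : z ∈ Algebra.adjoin K {x} := by
    rw [← IntermediateField.adjoin_simple_toSubalgebra_of_isAlgebraic hxi.isAlgebraic, htop]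
    trivial
  rw [Algebra.adjoin_singleton_eq_range_aeval] at hz
  obtain ⟨g, hg⟩ := hz
  refine ⟨g %ₘ minpoly K x, ?_, ?_⟩
  · rw [← hdeg]
    refine natDegree_modByMonic_lt g (minpoly.monic hxi) ?_
    intro h
    rw [h, natDegree_one] at hdeg
    exact hℓ.ne_zero hdeg.symm
  · rw [aeval_modByMonic_eq_self_of_root (minpoly.aeval K x)]
    exact hg

theorem aux_d5 {A K L : Type*} [CommRing A] [IsDomain A] [ValuationRing A]
    [Field K] [Algebra A K] [IsFractionRing A K]
    [Field L] [Algebra K L] [Algebra A L] [IsScalarTower A K L]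
    (s z : integralClosure A L) (n : ℕ) (c : ℕ → K)
    (hc : ∀ i, i < n → algebraMap K L (c i) ∈ integralClosure A L)
    (h : (z : L) = ∑ i ∈ Finset.range n, algebraMap K L (c i) * (s : L) ^ i) :
    z ∈ Algebra.adjoin A {s} := by
  have hex : ∀ i, ∃ a : A, i < n → algebraMap A K a = c i := by
    intro i
    by_cases hi : i < n
    · obtain ⟨a, ha⟩ := aux_d1 (c i) (hc i hi)
      exact ⟨a, fun _ => ha⟩
    · exact ⟨0, fun h => absurd h hi⟩
  choose a ha using hex
  have hz : z = ∑ i ∈ Finset.range n, a i • s ^ i := by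
    apply Subtype.ext
    rw [h, AddSubmonoidClass.coe_finsetSum]
    refine Finset.sum_congr rfl fun i hi => ?_
    rw [← ha i (Finset.mem_range.mp hi), ← IsScalarTower.algebraMap_apply]
    simp [Algebra.smul_def]
  rw [hz]
  exact Subalgebra.sum_mem _ fun i _ => Subalgebra.smul_mem _
    (Subalgebra.pow_mem _ (Algebra.self_mem_adjoin_singleton A s) i) _

theorem aux_case3
    {A K L : Type*} [CommRing A] [IsDomain A] [ValuationRing A] [HenselianLocalRing A]
    [Field K] [Algebra A K] [IsFractionRing A K]
    [Field L] [Algebra K L] [Algebra A L] [IsScalarTower A K L]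
    [IsGalois K L] [FiniteDimensional K L]
    (ℓ : ℕ) (hℓ : ℓ.Prime) (hcard : Nat.card (L ≃ₐ[K] L) = ℓ)
    (V : ValuationSubring L) (hV : ∀ z, z ∈ V ↔ z ∈ integralClosure A L)
    (hval : ∀ z : L, ∃ c : K, V.valuation (algebraMap K L c) = V.valuation z)
    (hres : ∀ z : L, V.valuation z ≤ 1 → ∃ a : K, V.valuation (z - algebraMap K L a) < 1)
    (S : Finset ↥(integralClosure A L)) :
    ∃ s : ↥(integralClosure A L),
      (S : Set ↥(integralClosure A L)) ⊆ Algebra.adjoin A {s} := by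
  classical
  have hd : Module.finrank K L = ℓ := by rw [← hcard, IsGalois.card_aut_eq_finrank]
  have hinv := aux_d2 (K := K) V hV
  set v := V.valuation with hv
  have hle : ∀ z, v z ≤ 1 ↔ z ∈ integralClosure A L := fun z => by
    rw [hv, V.valuation_le_one_iff, hV]
  have hx : ∃ x : L, ∀ a : K, algebraMap K L a ≠ x := by
    by_contra h
    push Not at h
    have : (1 : L) ≠ 0 := one_ne_zero
    have h1 : Module.finrank K L = 1 := finrank_eq_one_iff_of_nonzero' 1 this |>.mpr fun w => by
      obtain ⟨a, ha⟩ := h w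
      exact ⟨a, by rw [Algebra.smul_def, mul_one, ha]⟩
    exact hℓ.ne_one (hd.symm.trans h1)
  obtain ⟨x, hxK⟩ := hx
  have hnat : ∀ n : ℕ, v (n : L) ≤ 1 := fun n => (hle _).mpr (natCast_mem _ n)
  have hintc : ∀ n : ℤ, v (n : L) ≤ 1 := fun n => (hle _).mpr (intCast_mem _ n)
  have hxne : ∀ a : K, v (x - algebraMap K L a) ≠ 0 := by
    intro a h
    rw [Valuation.zero_iff, sub_eq_zero] at h
    exact hxK a h.symm
  -- approximations
  have happ : ∀ z : L, z ≠ 0 → ∃ b : K, v (z - algebraMap K L b) < v z := by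
    intro z hz
    obtain ⟨c, hc⟩ := hval z
    have hz0 : v z ≠ 0 := by simpa using hz
    have hc0 : algebraMap K L c ≠ 0 := by
      rw [← Valuation.ne_zero_iff v, hc]; exact hz0
    obtain ⟨a, ha⟩ := hres (z / algebraMap K L c) (by
      rw [map_div₀, hc, div_self hz0])
    refine ⟨a * c, ?_⟩
    have h1 : z - algebraMap K L (a * c) =
        (z / algebraMap K L c - algebraMap K L a) * algebraMap K L c := by
      rw [sub_mul, div_mul_cancel₀ _ hc0, map_mul]
    rw [h1, map_mul, hc]
    exact mul_lt_of_lt_one_left (zero_lt_iff.mpr hz0) ha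
  have hlt : v (ℓ : L) < 1 := by
    refine lt_of_le_of_ne (hnat ℓ) fun h1 => ?_
    have hsum : ∀ z : L, ∑ σ : L ≃ₐ[K] L, σ z = algebraMap K L (Algebra.trace K L z) :=
      fun z => (trace_eq_sum_automorphisms (K := K) z).symm
    have hcardF : Fintype.card (L ≃ₐ[K] L) = ℓ := by rw [← hcard, Nat.card_eq_fintype_card]
    have hconst : ∀ a : K, ∑ σ : L ≃ₐ[K] L, σ (algebraMap K L a) = (ℓ : L) * algebraMap K L a := by
      intro a
      simp [hcardF]
    set w : L := (ℓ : L) * x - algebraMap K L (Algebra.trace K L x) with hw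
    have hℓ0 : (ℓ : L) ≠ 0 := by
      intro h
      rw [h, map_zero] at h1
      exact zero_ne_one h1
    have hw0 : w ≠ 0 := by
      intro h
      apply hxK (Algebra.trace K L x / (ℓ : K))
      rw [map_div₀, map_natCast, div_eq_iff hℓ0, mul_comm]
      exact (sub_eq_zero.mp h).symm
    have hwt : ∑ σ : L ≃ₐ[K] L, σ w = 0 := by
      simp only [hw, map_sub, map_mul, map_natCast, Finset.sum_sub_distrib]
      rw [← Finset.mul_sum, hsum, hconst, sub_self]
    obtain ⟨b, hb⟩ := happ w hw0
    have hvb : v (algebraMap K L b) = v w := by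
      have h2 : algebraMap K L b = w - (w - algebraMap K L b) := by ring
      rw [h2]
      exact Valuation.map_sub_eq_of_lt_left v hb
    have h3 : ∑ σ : L ≃ₐ[K] L, σ (w - algebraMap K L b) = - ((ℓ : L) * algebraMap K L b) := by
      rw [← hconst, ← zero_sub, ← hwt, ← Finset.sum_sub_distrib]
      exact Finset.sum_congr rfl fun σ _ => map_sub σ _ _
    have h4 : v (∑ σ : L ≃ₐ[K] L, σ (w - algebraMap K L b)) < v w :=
      Valuation.map_sum_lt v (by simpa using hw0) fun σ _ => by rw [hinv]; exact hb
    rw [h3, Valuation.map_neg, map_mul, h1, one_mul, hvb] at h4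
    exact lt_irrefl _ h4
  have hu : ∀ m : ℕ, 0 < m → m < ℓ → v (m : L) = 1 := by
    intro m hm hml
    refine le_antisymm (hnat m) ?_
    by_contra hcon
    rw [not_le] at hcon
    have hc : Nat.Coprime m ℓ :=
      ((Nat.Prime.coprime_iff_not_dvd hℓ).mpr fun h => by
        have := Nat.le_of_dvd hm h; omega).symm
    have hb := Nat.gcd_eq_gcd_ab m ℓ
    rw [hc] at hb
    have hb' : (1 : L) = (m : L) * (Nat.gcdA m ℓ : L) + (ℓ : L) * (Nat.gcdB m ℓ : L) := by
      exact_mod_cast congrArg (Int.cast : ℤ → L) hb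
    have h1 : v ((m : L) * (Nat.gcdA m ℓ : L) + (ℓ : L) * (Nat.gcdB m ℓ : L)) < 1 := by
      refine Valuation.map_add_lt v ?_ ?_
      · rw [map_mul]; exact mul_lt_one_of_lt_of_le hcon (hintc _)
      · rw [map_mul]; exact mul_lt_one_of_lt_of_le hlt (hintc _)
    rw [← hb', map_one] at h1
    exact lt_irrefl _ h1
  have hw : ∀ a : K, v (algebraMap K L a) < 1 →
      ∃ a' ∈ IsLocalRing.maximalIdeal A, algebraMap A K a' = a := by
    intro a ha
    obtain ⟨a', rfl⟩ := aux_d1 (A := A) a ((hle _).mp ha.le)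
    refine ⟨a', (IsLocalRing.mem_maximalIdeal _).mpr fun hun => ?_, rfl⟩
    obtain ⟨b, hb⟩ := hun.exists_left_inv
    have h1 : v (algebraMap A L b * algebraMap A L a') < 1 := by
      rw [map_mul, mul_comm]
      rw [← IsScalarTower.algebraMap_apply] at ha
      exact mul_lt_one_of_lt_of_le ha ((hle _).mpr (algebraMap_mem _ b))
    rw [← map_mul, hb, map_one, map_one] at h1
    exact lt_irrefl _ h1
  have hxa : ∀ a : K, ∃ b : K, v (x - algebraMap K L b) < v (x - algebraMap K L a) := by
    intro a
    obtain ⟨b, hb⟩ := happ (x - algebraMap K L a) (by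
      rw [← Valuation.ne_zero_iff v]; exact hxne a)
    exact ⟨a + b, by rwa [map_add, ← sub_sub]⟩
  have hst : ∀ z : L, ∃ (f : K[X]) (a₀ : K), f.natDegree < ℓ ∧ aeval x f = z ∧ (z ≠ 0 →
      ∀ a : K, v (x - algebraMap K L a) ≤ v (x - algebraMap K L a₀) →
        ∀ i, 1 ≤ i → v (auxU x a f i) < v (auxU x a f 0)) := by
    intro z
    obtain ⟨f, hf, hfz⟩ := aux_d4 ℓ hℓ hd x hxK z
    by_cases hz : z = 0
    · exact ⟨f, 0, hf, hfz, fun h => absurd hz h⟩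
    · have hf0 : f ≠ 0 := by
        rintro rfl
        exact hz (by rw [← hfz, map_zero])
      obtain ⟨a₀, ha₀⟩ := aux_stable (A := A) v hw x hxa ℓ hu f.natDegree f hf0 le_rfl hf
      exact ⟨f, a₀, hf, hfz, fun _ => ha₀⟩
  choose f a₀ hfd hfz hfs using hst
  have hmin : ∃ a : K, ∀ z ∈ S, v (x - algebraMap K L a) ≤ v (x - algebraMap K L (a₀ z)) := by
    rcases S.eq_empty_or_nonempty with rfl | hne
    · exact ⟨0, by simp⟩
    · obtain ⟨z, -, hz⟩ := Finset.exists_min_image S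
        (fun z => v (x - algebraMap K L (a₀ z))) hne
      exact ⟨a₀ z, hz⟩
  obtain ⟨a, ha⟩ := hmin
  obtain ⟨c, hc⟩ := hval (x - algebraMap K L a)
  have hc0 : algebraMap K L c ≠ 0 := by
    rw [← Valuation.ne_zero_iff v, hc]; exact hxne a
  refine ⟨⟨(x - algebraMap K L a) / algebraMap K L c, (hle _).mp ?_⟩, ?_⟩
  · rw [map_div₀, hc, div_self (hxne a)]
  intro z hz
  by_cases hz0 : (z : L) = 0
  · have : z = 0 := Subtype.ext hz0
    rw [this]; exact zero_mem _
  have hs := hfs z hz0 a (ha z hz)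
  have hsumz := auxU_sum x a (f z) ℓ (hfd z)
  rw [hfz] at hsumz
  obtain ⟨F, hF⟩ : ∃ F, F = f (z : L) := ⟨_, rfl⟩
  rw [← hF] at hs hsumz
  have hvz : v (z : L) = v (auxU x a F 0) := by
    rw [hsumz]
    refine Valuation.map_sum_eq_of_lt v (Finset.mem_range.mpr hℓ.pos) fun i hi => ?_
    simp only [Finset.mem_sdiff, Finset.mem_singleton] at hi
    exact hs i (by omega)
  have hz1 : v (z : L) ≤ 1 := (hle _).mpr z.2
  refine aux_d5 _ z ℓ (fun i => (taylor a F).coeff i * c ^ i) (fun i _ => ?_) ?_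
  · rw [← hle, map_mul, map_pow, map_mul, map_pow, hc, ← map_pow, ← map_mul]
    change v (auxU x a F i) ≤ 1
    rw [hvz] at hz1
    rcases Nat.eq_zero_or_pos i with rfl | hi
    · exact hz1
    · exact (hs i hi).le.trans hz1
  · rw [hsumz]
    refine Finset.sum_congr rfl fun i _ => ?_
    simp only [auxU, map_mul, map_pow, div_pow]
    field_simp

theorem aux_terms {K L Γ : Type*} [Field K] [Field L] [Algebra K L]
    [LinearOrderedCommGroupWithZero Γ] (v : Valuation L Γ) (ℓ : ℕ) (hℓ : 0 < ℓ) (y : L)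
    (hy0 : y ≠ 0)
    (hy : ∀ i, 1 ≤ i → i < ℓ → ∀ c : K, v (algebraMap K L c) ≠ v (y ^ i)) (c : ℕ → K) :
    ∃ j, j < ℓ ∧ v (∑ i ∈ Finset.range ℓ, algebraMap K L (c i) * y ^ i) =
        v (algebraMap K L (c j) * y ^ j) ∧
      ∀ i, i < ℓ → v (algebraMap K L (c i) * y ^ i) ≤
        v (∑ i ∈ Finset.range ℓ, algebraMap K L (c i) * y ^ i) := by
  have key : ∀ i j, i < j → j < ℓ → v (algebraMap K L (c i) * y ^ i) =
      v (algebraMap K L (c j) * y ^ j) → v (algebraMap K L (c j) * y ^ j) = 0 := by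
    intro i j hij hj h
    by_contra h0
    rw [← ne_eq, Valuation.ne_zero_iff] at h0
    have hcj : algebraMap K L (c j) ≠ 0 := left_ne_zero_of_mul h0
    refine hy (j - i) (by omega) (by omega) (c i / c j) ?_
    have hvy : v (y ^ i) ≠ 0 := by simpa using fun h => absurd h hy0
    have hvc : v (algebraMap K L (c j)) ≠ 0 := by rwa [Valuation.ne_zero_iff]
    rw [map_div₀, map_div₀, div_eq_iff hvc]
    have hp : y ^ j = y ^ (j - i) * y ^ i := by rw [← pow_add]; congr 1; omega
    rw [hp, map_mul, map_mul, map_mul, ← mul_assoc] at h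
    rw [mul_comm]
    rw [mul_left_inj' hvy] at h
    exact h
  obtain ⟨j, hj, hmax⟩ := Finset.exists_max_image (Finset.range ℓ)
    (fun i => v (algebraMap K L (c i) * y ^ i)) ⟨0, Finset.mem_range.mpr hℓ⟩
  have hsum : v (∑ i ∈ Finset.range ℓ, algebraMap K L (c i) * y ^ i) =
        v (algebraMap K L (c j) * y ^ j) := by
    by_cases h0 : v (algebraMap K L (c j) * y ^ j) = 0
    · rw [h0, Valuation.zero_iff]
      refine Finset.sum_eq_zero fun i hi => ?_
      have := hmax i hi
      rw [h0] at this
      rw [← Valuation.zero_iff v]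
      exact le_zero_iff.mp this
    · refine Valuation.map_sum_eq_of_lt v hj fun i hi => ?_
      simp only [Finset.mem_sdiff, Finset.mem_singleton] at hi
      refine lt_of_le_of_ne (hmax i hi.1) fun he => ?_
      rcases lt_or_gt_of_ne hi.2 with h | h
      · exact h0 (key i j h (Finset.mem_range.mp hj) he)
      · exact h0 (he ▸ key j i h (Finset.mem_range.mp hi.1) he.symm)
  refine ⟨j, Finset.mem_range.mp hj, hsum, fun i hi => ?_⟩
  rw [hsum]
  exact hmax i (Finset.mem_range.mpr hi)

theorem aux_case2
    {A K L : Type*} [CommRing A] [IsDomain A] [ValuationRing A] [HenselianLocalRing A]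
    [Field K] [Algebra A K] [IsFractionRing A K]
    [Field L] [Algebra K L] [Algebra A L] [IsScalarTower A K L]
    [IsGalois K L] [FiniteDimensional K L]
    (ℓ : ℕ) (hℓ : ℓ.Prime) (hcard : Nat.card (L ≃ₐ[K] L) = ℓ)
    (V : ValuationSubring L) (hV : ∀ z, z ∈ V ↔ z ∈ integralClosure A L)
    (x₀ : L) (hval : ∀ c : K, V.valuation (algebraMap K L c) ≠ V.valuation x₀)
    (S : Finset ↥(integralClosure A L)) :
    ∃ s : ↥(integralClosure A L),
      (S : Set ↥(integralClosure A L)) ⊆ Algebra.adjoin A {s} := by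
  classical
  have hd : Module.finrank K L = ℓ := by rw [← hcard, IsGalois.card_aut_eq_finrank]
  have hinv := aux_d2 (K := K) V hV
  have hsurj := V.valuation_surjective
  set v := V.valuation with hv
  have hle : ∀ z, v z ≤ 1 ↔ z ∈ integralClosure A L := fun z => by
    rw [hv, V.valuation_le_one_iff, hV]
  let φ : Kˣ →* V.ValueGroupˣ := Units.map ((v : L →* V.ValueGroup).comp (algebraMap K L : K →* L))
  let H : Subgroup V.ValueGroupˣ := φ.range
  have hφ : ∀ c : Kˣ, ((φ c : V.ValueGroupˣ) : V.ValueGroup) = v (algebraMap K L c) := fun c => rfl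
  have hH : ∀ γ : V.ValueGroupˣ, γ ∈ H ↔ ∃ c : K, v (algebraMap K L c) = (γ : V.ValueGroup) := by
    intro γ
    constructor
    · rintro ⟨c, rfl⟩
      exact ⟨c, rfl⟩
    · rintro ⟨c, hc⟩
      have hc0 : c ≠ 0 := by
        rintro rfl
        rw [map_zero, map_zero] at hc
        exact γ.ne_zero hc.symm
      exact ⟨Units.mk0 c hc0, Units.ext hc⟩
  have hpow : ∀ γ, γ ^ ℓ ∈ H := by
    intro γ
    obtain ⟨y, hy⟩ := hsurj γ
    rw [hH]
    refine ⟨Algebra.norm K y, ?_⟩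
    rw [Algebra.norm_eq_prod_automorphisms, map_prod]
    simp only [hinv, hy]
    rw [Finset.prod_const, Finset.card_univ, ← Nat.card_eq_fintype_card, hcard, Units.val_pow_eq_pow_val]
  have hyH : ∀ (y : L) (g : V.ValueGroupˣ), v y = g → g ∉ H →
      y ≠ 0 ∧ (∀ a : K, algebraMap K L a ≠ y) ∧
      ∀ i, 1 ≤ i → i < ℓ → ∀ c : K, v (algebraMap K L c) ≠ v (y ^ i) := by
    intro y g hy hg
    refine ⟨?_, ?_, ?_⟩
    · rintro rfl
      rw [map_zero] at hy
      exact g.ne_zero hy.symm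
    · intro a ha
      exact hg ((hH g).mpr ⟨a, by rw [ha, hy]⟩)
    · intro i h1 h2 c hc
      refine aux_pow_notMem H ℓ hℓ hpow g hg i h1 h2 ((hH _).mpr ⟨c, ?_⟩)
      rw [hc, map_pow, hy, Units.val_pow_eq_pow_val]
  have hexp : ∀ (y : L) (g : V.ValueGroupˣ), v y = g → g ∉ H → ∀ z : L, ∃ c : ℕ → K,
      z = ∑ i ∈ Finset.range ℓ, algebraMap K L (c i) * y ^ i := by
    intro y g hy hg z
    obtain ⟨f, hf, hfz⟩ := aux_d4 ℓ hℓ hd y (hyH y g hy hg).2.1 z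
    refine ⟨f.coeff, ?_⟩
    rw [← hfz, aeval_eq_sum_range' hf]
    exact Finset.sum_congr rfl fun i _ => Algebra.smul_def _ _
  have hcyc : ∀ g, g ∉ H → ∀ γ, ∃ i, i < ℓ ∧ γ / g ^ i ∈ H := by
    intro g hg γ
    obtain ⟨y, hy⟩ := hsurj g
    obtain ⟨z, hz⟩ := hsurj γ
    obtain ⟨c, hc⟩ := hexp y g hy hg z
    obtain ⟨j, hj, hj', -⟩ := aux_terms v ℓ hℓ.pos y (hyH y g hy hg).1 (hyH y g hy hg).2.2 c
    rw [← hc, hz, map_mul, map_pow, hy] at hj'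
    refine ⟨j, hj, (hH _).mpr ⟨c j, ?_⟩⟩
    rw [Units.val_div_eq_div_val, hj', Units.val_pow_eq_pow_val, mul_div_cancel_right₀]
    exact pow_ne_zero _ g.ne_zero
  have hx₀ : v x₀ ≠ 0 := by
    intro h
    exact hval 0 (by rw [map_zero, map_zero, h])
  obtain ⟨g, hg, hD⟩ := aux_group H ℓ hℓ hpow hcyc (Units.mk0 (v x₀) hx₀) (by
    rw [hH]
    rintro ⟨c, hc⟩
    exact hval c hc)
  obtain ⟨x, hx⟩ := hsurj g
  obtain ⟨hx0, hxK, hxi⟩ := hyH x g hx hg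
  choose c hc using hexp x g hx hg
  let δ : L → ℕ → V.ValueGroupˣ := fun z i =>
    if h : v (algebraMap K L (c z i) * x ^ i) = 0 then 1 else Units.mk0 _ h
  have hterm : ∀ z : L, v z ≤ 1 → ∀ i, i < ℓ → v (algebraMap K L (c z i) * x ^ i) ≤ 1 := by
    intro z hz i hi
    obtain ⟨j, hj, hj1, hj2⟩ := aux_terms v ℓ hℓ.pos x hx0 hxi (c z)
    have := hj2 i hi
    rw [← hc z] at this
    exact this.trans hz
  obtain ⟨σ, hσ1, hσg, hσ⟩ := hD
    ((S ×ˢ Finset.range ℓ).image fun p => δ (p.1 : L) p.2) (by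
      intro d hd
      obtain ⟨⟨z, i⟩, hp, rfl⟩ := Finset.mem_image.mp hd
      rw [Finset.mem_product, Finset.mem_range] at hp
      simp only [δ]
      split_ifs with h
      · exact le_rfl
      · rw [← Units.val_le_val]
        exact hterm _ ((hle _).mpr z.2) i hp.2)
  obtain ⟨b, hb⟩ := (hH _).mp hσg
  have hbL : algebraMap K L b ≠ 0 := by
    rw [← Valuation.ne_zero_iff v, hb]
    exact Units.ne_zero _
  have hs : v (algebraMap K L b * x) = σ := by
    rw [map_mul, hb, hx, ← Units.val_mul, div_mul_cancel]
  refine ⟨⟨algebraMap K L b * x, (hle _).mp ?_⟩, ?_⟩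
  · rw [hs]; exact_mod_cast hσ1.le
  intro z hz
  refine aux_d5 _ z ℓ (fun i => c z i / b ^ i) (fun i hi => ?_) ?_
  · rw [← hle]
    have ht := hterm z ((hle _).mpr z.2) i hi
    rcases Nat.eq_zero_or_pos i with rfl | hi1
    · simpa using ht
    by_cases h0 : v (algebraMap K L (c z i) * x ^ i) = 0
    · rw [Valuation.zero_iff, mul_eq_zero] at h0
      rcases h0 with h0 | h0
      · rw [map_div₀, h0, zero_div, map_zero]; exact zero_le_one
      · exact absurd h0 (pow_ne_zero _ hx0)
    have hδ : ((δ z i : V.ValueGroupˣ) : V.ValueGroup) = v (algebraMap K L (c z i) * x ^ i) := by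
      simp only [δ, dif_neg h0, Units.val_mk0]
    have h1 := hσ (δ z i) (Finset.mem_image.mpr
      ⟨(z, i), Finset.mem_product.mpr ⟨hz, Finset.mem_range.mpr hi⟩, rfl⟩) i hi1 hi
      ((hH _).mpr ⟨c z i, by
        rw [Units.val_div_eq_div_val, hδ, map_mul, map_pow, hx, Units.val_pow_eq_pow_val,
          mul_div_cancel_right₀]
        exact pow_ne_zero _ g.ne_zero⟩)
    rw [← Units.val_le_val, hδ, Units.val_pow_eq_pow_val, ← hs, ← map_pow, mul_pow, map_mul,
      map_mul, mul_le_mul_iff_left₀ (zero_lt_iff.mpr (by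
        rw [Valuation.ne_zero_iff]; exact pow_ne_zero _ hx0))] at h1
    rw [map_div₀, map_div₀, map_pow, div_le_one₀ (zero_lt_iff.mpr (by
        rw [Valuation.ne_zero_iff]; exact pow_ne_zero _ hbL))]
    exact h1
  · conv_lhs => rw [hc z]
    refine Finset.sum_congr rfl fun i _ => ?_
    simp only [map_div₀, map_pow, mul_pow]
    field_simp

theorem aux_res {k κ ι : Type*} [Field k] [Field κ] [Fintype ι] [Nonempty ι] (ψ : k →+* κ)
    (ℓ : ℕ) (hℓ : ℓ.Prime) (hι : Fintype.card ι = ℓ) (α : κ) (hα : ∀ a, ψ a ≠ α) (β : ι → κ)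
    (hβ : ∀ p : k[X], p.eval₂ ψ α = 0 → ∀ i, p.eval₂ ψ (β i) = 0)
    (hor : Function.Injective β ∨ ∃ Q : k[X], Q.map ψ = (X - C α) ^ ℓ)
    (p : k[X]) (hp0 : p ≠ 0) (hp : p.natDegree < ℓ) : p.eval₂ ψ α ≠ 0 := by
  classical
  intro h
  rcases hor with hinj | ⟨Q, hQ⟩
  · have hpm : p.map ψ ≠ 0 := (Polynomial.map_ne_zero_iff ψ.injective).mpr hp0
    have h1 : Finset.univ.image β ⊆ (p.map ψ).roots.toFinset := by
      intro b hb
      obtain ⟨i, -, rfl⟩ := Finset.mem_image.mp hb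
      rw [Multiset.mem_toFinset, mem_roots hpm, IsRoot.def, eval_map]
      exact hβ p h i
    have h2 := Finset.card_le_card h1
    rw [Finset.card_image_of_injective _ hinj, Finset.card_univ, hι] at h2
    have h3 := (p.map ψ).card_roots'
    have h4 := (p.map ψ).roots.toFinset_card_le
    rw [natDegree_map] at h3
    omega
  · letI : Algebra k κ := ψ.toAlgebra
    have hint : IsIntegral k α := by
      rw [← isAlgebraic_iff_isIntegral]
      exact ⟨p, hp0, h⟩
    have hmp : minpoly k α ∣ p := minpoly.dvd k α h
    have hdeg : (minpoly k α).natDegree < ℓ := (natDegree_le_of_dvd hmp hp0).trans_lt hp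
    have hpos := minpoly.natDegree_pos hint
    have hmQ : minpoly k α ∣ Q := by
      refine minpoly.dvd k α ?_
      change Q.eval₂ ψ α = 0
      rw [← eval_map, hQ]
      simp [hℓ.ne_zero]
    have hmQ' : (minpoly k α).map ψ ∣ (X - C α) ^ ℓ := hQ ▸ Polynomial.map_dvd ψ hmQ
    obtain ⟨d, -, hass⟩ := (dvd_prime_pow (prime_X_sub_C α) ℓ).mp hmQ'
    have heq := eq_of_monic_of_associated ((minpoly.monic hint).map ψ)
      ((monic_X_sub_C α).pow d) hass
    have hd : (minpoly k α).natDegree = d := by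
      rw [← natDegree_map ψ, heq, natDegree_pow, natDegree_X_sub_C, mul_one]
    rw [hd] at hdeg hpos
    have m1 : (d : κ) * α ∈ ψ.fieldRange := by
      refine ⟨-(minpoly k α).nextCoeff, ?_⟩
      rw [map_neg, ← nextCoeff_map_eq, heq, (monic_X_sub_C α).nextCoeff_pow, nextCoeff_X_sub_C]
      simp
    have m2 : (ℓ : κ) * α ∈ ψ.fieldRange := by
      refine ⟨-Q.nextCoeff, ?_⟩
      rw [map_neg, ← nextCoeff_map_eq, hQ, (monic_X_sub_C α).nextCoeff_pow, nextCoeff_X_sub_C]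
      simp
    have hc : Nat.Coprime d ℓ :=
      ((Nat.Prime.coprime_iff_not_dvd hℓ).mpr fun h => by
        have := Nat.le_of_dvd hpos h; omega).symm
    have hb := Nat.gcd_eq_gcd_ab d ℓ
    rw [hc] at hb
    have hb' : (1 : κ) = (d : κ) * (Nat.gcdA d ℓ : κ) + (ℓ : κ) * (Nat.gcdB d ℓ : κ) := by
      exact_mod_cast congrArg (Int.cast : ℤ → κ) hb
    have hα' : α = ((Nat.gcdA d ℓ : ℤ) : κ) * ((d : κ) * α) +
        ((Nat.gcdB d ℓ : ℤ) : κ) * ((ℓ : κ) * α) := by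
      linear_combination α * hb'
    have : α ∈ ψ.fieldRange := by
      rw [hα']
      exact add_mem (mul_mem (intCast_mem _ _) m1) (mul_mem (intCast_mem _ _) m2)
    obtain ⟨a, ha⟩ := this
    exact hα a ha

theorem aux_case1
    {A K L : Type*} [CommRing A] [IsDomain A] [ValuationRing A] [HenselianLocalRing A]
    [Field K] [Algebra A K] [IsFractionRing A K]
    [Field L] [Algebra K L] [Algebra A L] [IsScalarTower A K L]
    [IsGalois K L] [FiniteDimensional K L]
    (ℓ : ℕ) (hℓ : ℓ.Prime) (hcard : Nat.card (L ≃ₐ[K] L) = ℓ)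
    (V : ValuationSubring L) (hV : ∀ z, z ∈ V ↔ z ∈ integralClosure A L)
    (s : L) (hs1 : V.valuation s ≤ 1)
    (hs : ∀ a : K, ¬ V.valuation (s - algebraMap K L a) < 1)
    (S : Finset ↥(integralClosure A L)) :
    ∃ s : ↥(integralClosure A L),
      (S : Set ↥(integralClosure A L)) ⊆ Algebra.adjoin A {s} := by
  classical
  have hd : Module.finrank K L = ℓ := by rw [← hcard, IsGalois.card_aut_eq_finrank]
  have hcardF : Fintype.card (L ≃ₐ[K] L) = ℓ := by rw [← hcard, Nat.card_eq_fintype_card]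
  have hinv := aux_d2 (K := K) V hV
  have hle : ∀ z, V.valuation z ≤ 1 ↔ z ∈ integralClosure A L := fun z => by
    rw [V.valuation_le_one_iff, hV]
  have hsK : ∀ a : K, algebraMap K L a ≠ s := by
    intro a ha
    apply hs a
    rw [ha, sub_self, map_zero]
    exact zero_lt_one
  let θ : A →+* V := (algebraMap A L).codRestrict V.toSubring
    (fun a => (hV _).mpr (algebraMap_mem _ a))
  have hθ : ∀ a, ((θ a : V) : L) = algebraMap A L a := fun a => rfl
  haveI hloc : IsLocalHom θ := by
    constructor
    intro a ha
    obtain ⟨w, hw⟩ := ha.exists_right_inv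
    have h1 : algebraMap A L a * (w : L) = 1 := by
      rw [← hθ]; exact congrArg (Subtype.val) hw
    have h2 : algebraMap K L (algebraMap A K a)⁻¹ = w := by
      rw [map_inv₀, ← IsScalarTower.algebraMap_apply]
      exact inv_eq_of_mul_eq_one_right h1
    obtain ⟨b, hb⟩ := aux_d1 (A := A) (L := L) (algebraMap A K a)⁻¹ (by
      rw [h2, ← hV]; exact w.2)
    have h3 : a * b = 1 := by
      apply IsFractionRing.injective A K
      rw [map_mul, hb, map_one]
      refine mul_inv_cancel₀ fun h0 => ?_
      rw [IsScalarTower.algebraMap_apply A K L, h0] at h1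
      simp at h1
    exact IsUnit.of_mul_eq_one b h3
  let ψ := IsLocalRing.ResidueField.map θ
  let r := IsLocalRing.residue V
  have hr : ∀ t : V, r t = 0 ↔ V.valuation (t : L) < 1 := by
    intro t
    rw [← V.valuation_lt_one_iff]
    exact IsLocalRing.residue_eq_zero_iff t
  have hψ : ∀ a : A, ψ (IsLocalRing.residue A a) = r (θ a) := fun a => rfl
  have hcomp : ψ.comp (IsLocalRing.residue A) = r.comp θ := rfl
  let t : (L ≃ₐ[K] L) → V := fun σ => ⟨σ s, by
    rw [← V.valuation_le_one_iff, hinv]; exact hs1⟩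
  have hev : ∀ (P : A[X]) (σ : L ≃ₐ[K] L),
      (P.map (IsLocalRing.residue A)).eval₂ ψ (r (t σ)) = 0 ↔ V.valuation (aeval s P) < 1 := by
    intro P σ
    rw [eval₂_map, hcomp, ← hom_eval₂, hr]
    have h1 : ((P.eval₂ θ (t σ) : V) : L) = σ (aeval s P) := by
      have h2 : ((P.eval₂ θ (t σ) : V) : L) = P.eval₂ (algebraMap A L) (σ s) := by
        have := hom_eval₂ P θ V.subtype (t σ)
        exact this
      rw [h2, ← aeval_def]
      exact (aeval_algHom_apply (σ.toAlgHom.restrictScalars A) s P)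
    rw [h1, hinv]
  have hα : ∀ a, ψ a ≠ r (t 1) := by
    intro a ha
    obtain ⟨a, rfl⟩ := IsLocalRing.residue_surjective a
    rw [hψ, eq_comm, ← sub_eq_zero, ← map_sub, hr] at ha
    apply hs (algebraMap A K a)
    rw [← IsScalarTower.algebraMap_apply]
    exact ha
  have hor : Function.Injective (fun σ => r (t σ)) ∨
      ∃ Q : (IsLocalRing.ResidueField A)[X], Q.map ψ = (X - C (r (t 1))) ^ ℓ := by
    by_cases hinj : Function.Injective (fun σ => r (t σ))
    · exact Or.inl hinj
    right
    simp only [Function.Injective, not_forall] at hinj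
    obtain ⟨σ, τ, hστ, hne⟩ := hinj
    rw [← sub_eq_zero, ← map_sub, hr] at hστ
    have hρ1 : V.valuation (s - (σ⁻¹ * τ) s) < 1 := by
      rw [← hinv σ, map_sub, ← AlgEquiv.mul_apply, mul_inv_cancel_left]
      exact hστ
    have hρne : σ⁻¹ * τ ≠ 1 := by
      intro h
      exact hne (inv_mul_eq_one.mp h)
    generalize σ⁻¹ * τ = ρ at hρ1 hρne
    have hpow : ∀ n : ℕ, V.valuation (s - (ρ ^ n) s) < 1 := by
      intro n
      induction n with
      | zero => simp
      | succ n ih =>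
        have : s - (ρ ^ (n + 1)) s = (s - ρ s) + ρ (s - (ρ ^ n) s) := by
          rw [map_sub, pow_succ', AlgEquiv.mul_apply]; ring
        rw [this]
        exact Valuation.map_add_lt _ hρ1 (by rwa [hinv])
    haveI : Fact ℓ.Prime := ⟨hℓ⟩
    have hall : ∀ τ, r (t τ) = r (t 1) := by
      intro τ
      obtain ⟨n, rfl⟩ : τ ∈ Submonoid.powers ρ := mem_powers_of_prime_card hcard hρne
      rw [eq_comm, ← sub_eq_zero, ← map_sub, hr]
      exact hpow n
    let CV : V[X] := ∏ σ : L ≃ₐ[K] L, (X - C (t σ))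
    haveI : Algebra.IsInvariant K L (L ≃ₐ[K] L) :=
      ⟨fun b hb => (IsGalois.mem_range_algebraMap_iff_fixed b).mpr hb⟩
    obtain ⟨Q0, hQ0⟩ := Algebra.IsInvariant.charpoly_mem_lifts K L (L ≃ₐ[K] L) s
    have hQ0' : Q0.map (algebraMap K L) = CV.map V.subtype := by
      have : MulSemiringAction.charpoly (L ≃ₐ[K] L) s = CV.map V.subtype := by
        rw [MulSemiringAction.charpoly_eq, Polynomial.map_prod]
        refine Finset.prod_congr rfl fun σ _ => ?_
        rw [Polynomial.map_sub, map_X, map_C]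
        rfl
      rw [← this, ← hQ0]
      rfl
    have hl : Q0 ∈ lifts (algebraMap A K) := by
      rw [lifts_iff_coeff_lifts]
      intro n
      obtain ⟨a, ha⟩ := aux_d1 (A := A) (L := L) (Q0.coeff n) (by
        rw [← coeff_map, hQ0', coeff_map, ← hV]
        exact (CV.coeff n).2)
      exact ⟨a, ha⟩
    obtain ⟨Q, hQ⟩ := (mem_lifts _).mp hl
    have hQV : Q.map θ = CV := by
      apply Polynomial.map_injective V.subtype Subtype.val_injective
      rw [← hQ0', ← hQ, Polynomial.map_map, Polynomial.map_map, ← IsScalarTower.algebraMap_eq]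
      rfl
    refine ⟨Q.map (IsLocalRing.residue A), ?_⟩
    rw [Polynomial.map_map, hcomp, ← Polynomial.map_map, hQV, Polynomial.map_prod]
    simp only [Polynomial.map_sub, map_X, map_C, hall]
    rw [Finset.prod_const, Finset.card_univ, hcardF]
  have hlow : ∀ P : A[X], P.map (IsLocalRing.residue A) ≠ 0 → P.natDegree < ℓ →
      ¬ V.valuation (aeval s P) < 1 := by
    intro P hP0 hP h
    rw [← hev P 1] at h
    refine aux_res ψ ℓ hℓ hcardF (r (t 1)) hα (fun σ => r (t σ)) ?_ hor _ hP0
      (natDegree_map_le.trans_lt hP) h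
    intro p hp σ
    obtain ⟨P, rfl⟩ := map_surjective _ IsLocalRing.residue_surjective p
    rw [hev] at hp ⊢
    exact hp
  refine ⟨⟨s, (hle s).mp hs1⟩, ?_⟩
  intro z _
  obtain ⟨f, hf, hfz⟩ := aux_d4 ℓ hℓ hd s hsK z
  by_cases hf0 : f = 0
  · have : z = 0 := Subtype.ext (by rw [← hfz, hf0, map_zero]; rfl)
    rw [this]; exact zero_mem _
  obtain ⟨P, c, hP, i, hi⟩ := aux_normalize (A := A) f hf0
  have hPdeg : P.natDegree < ℓ := by
    rw [← natDegree_map_eq_of_injective (IsFractionRing.injective A K) P, hP]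
    exact (natDegree_C_mul_le c f).trans_lt hf
  have h1 := hlow P (by
    intro h
    have := congrArg (fun p => p.coeff i) h
    simp [hi] at this) hPdeg
  rw [← aeval_map_algebraMap K, hP, map_mul, aeval_C, hfz, map_mul, not_lt] at h1
  have hz : V.valuation (z : L) ≤ 1 := (hle _).mpr z.2
  have hc : 1 ≤ V.valuation (algebraMap K L c) :=
    h1.trans (mul_le_of_le_one_right' hz)
  refine aux_d5 _ z ℓ f.coeff (fun i _ => ?_) ?_
  · rw [← hle]
    have h2 : algebraMap K L c * algebraMap K L (f.coeff i) = algebraMap A L (P.coeff i) := by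
      rw [IsScalarTower.algebraMap_apply A K L, ← coeff_map (algebraMap A K), hP, coeff_C_mul, map_mul]
    have h3 : V.valuation (algebraMap K L c * algebraMap K L (f.coeff i)) ≤ 1 := by
      rw [h2, hle]; exact algebraMap_mem _ _
    rw [map_mul] at h3
    exact (le_mul_of_one_le_left' hc).trans h3
  · rw [← hfz, aeval_eq_sum_range' hf]
    exact Finset.sum_congr rfl fun i _ => Algebra.smul_def _ _

/-- Let `A` be a Henselian valuation ring which is not a field, with fraction field `K`.
Let `L/K` be a Galois extension whose Galois group is cyclic of prime order `ℓ`, and let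
`B` be the integral closure of `A` in `L`.  Then every finite subset `S` of `B` is
contained in `A[s]` for some `s ∈ B`. -/
theorem finset_subset_adjoin_singleton
    {A K L : Type*} [CommRing A] [IsDomain A] [ValuationRing A] [HenselianLocalRing A]
    (hA : ¬IsField A)
    [Field K] [Algebra A K] [IsFractionRing A K]
    [Field L] [Algebra K L] [Algebra A L] [IsScalarTower A K L]
    [IsGalois K L] [FiniteDimensional K L]
    (ℓ : ℕ) (hℓ : ℓ.Prime) [IsCyclic (L ≃ₐ[K] L)]
    (hcard : Nat.card (L ≃ₐ[K] L) = ℓ)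
    (S : Finset ↥(integralClosure A L)) :
    ∃ s : ↥(integralClosure A L),
      (S : Set ↥(integralClosure A L)) ⊆ Algebra.adjoin A {s} := by
  obtain ⟨V, hV⟩ := aux_setup (A := A) (K := K) (L := L) (hcard ▸ hℓ)
  by_cases hres : ∀ z : L, V.valuation z ≤ 1 → ∃ a : K, V.valuation (z - algebraMap K L a) < 1
  · by_cases hval : ∀ z : L, ∃ c : K, V.valuation (algebraMap K L c) = V.valuation z
    · exact aux_case3 ℓ hℓ hcard V hV hval hres S
    · push Not at hval
      obtain ⟨x, hx⟩ := hval
      exact aux_case2 ℓ hℓ hcard V hV x hx S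
  · simp only [not_forall, not_exists] at hres
    obtain ⟨s, hs1, hs⟩ := hres
    exact aux_case1 ℓ hℓ hcard V hV s hs1 hs S
end
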